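/- Let ℳ be a bounded cyclic module over F₂ (HH_n(ℳ) = 0 for all but finitely many n), and suppose that the Hodge-to-de Rham spectral sequence for ℳ degenerates at the first page. Let Π(ℳ) be the complex with Π_n(ℳ) = ⊕_{p=0}^{n} HC_{n+1}(ℳ) and its differential ∂_Π, equipped with the involution τ(x_0,…,x_n) = (t_{n+1}x_n, t²_{n+1}x_{n−1}, …, t^{n+1}_{n+1}x_0). Then the spectral sequence ^{vh}E (first taking homology with respect to ∂_Π) attached to each of the bicomplexes Π^{ℤ/2} (the first-quadrant bicomplex with columns Π_*(ℳ) and horizontal differential 1+τ) and Π^{Tate} (its ℤ-periodic version) also degenerates at the first page. -/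

import Mathlib

noncomputable section
open TensorProduct

namespace LT

/-- A differential graded (dg) algebra over a commutative ring `k`: a chain complex with a
degree `-1` differential together with an associative unital multiplication satisfying the
(signed) Leibniz rule; over `𝔽₂` the signs are invisible. The grading is given by an internal
direct sum decomposition into submodules. -/
structure DGA (k : Type) [CommRing k] : Type 1 where
  V : Type
  [acg : AddCommGroup V]
  [mod : Module k V]
  gr : ℤ → Submodule k V
  internal : DirectSum.IsInternal gr
  d : V →ₗ[k] V
  d_d : ∀ x, d (d x) = 0
  d_gr : ∀ i, ∀ x ∈ gr i, d x ∈ gr (i - 1)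
  mul : V →ₗ[k] V →ₗ[k] V
  mul_assoc' : ∀ x y z, mul (mul x y) z = mul x (mul y z)
  one : V
  one_gr : one ∈ gr 0
  one_mul' : ∀ x, mul one x = x
  mul_one' : ∀ x, mul x one = x
  mul_gr : ∀ i j, ∀ x ∈ gr i, ∀ y ∈ gr j, mul x y ∈ gr (i + j)
  leibniz : ∀ i, ∀ x ∈ gr i, ∀ y, d (mul x y) = mul (d x) y + (Int.negOnePow i : ℤ) • mul x (d y)

attribute [instance] DGA.acg
attribute [instance 2000] DGA.mod

variable {k : Type} [CommRing k]

/-- A dg `(A,A)`-bimodule over a dg algebra `A`. -/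
structure DGBimod (A : DGA k) : Type 1 where
  V : Type
  [acg : AddCommGroup V]
  [mod : Module k V]
  gr : ℤ → Submodule k V
  internal : DirectSum.IsInternal gr
  d : V →ₗ[k] V
  d_d : ∀ x, d (d x) = 0
  d_gr : ∀ i, ∀ x ∈ gr i, d x ∈ gr (i - 1)
  actL : A.V →ₗ[k] V →ₗ[k] V
  actR : V →ₗ[k] A.V →ₗ[k] V
  actL_one : ∀ m, actL A.one m = m
  actR_one : ∀ m, actR m A.one = m
  actL_mul : ∀ a b m, actL (A.mul a b) m = actL a (actL b m)
  actR_mul : ∀ m a b, actR (actR m a) b = actR m (A.mul a b)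
  actLR : ∀ a m b, actR (actL a m) b = actL a (actR m b)
  actL_gr : ∀ i j, ∀ a ∈ A.gr i, ∀ m ∈ gr j, actL a m ∈ gr (i + j)
  actR_gr : ∀ i j, ∀ m ∈ gr i, ∀ a ∈ A.gr j, actR m a ∈ gr (i + j)
  leibnizL : ∀ i, ∀ a ∈ A.gr i, ∀ m, d (actL a m) = actL (A.d a) m + (Int.negOnePow i : ℤ) • actL a (d m)
  leibnizR : ∀ j, ∀ m ∈ gr j, ∀ a, d (actR m a) = actR (d m) a + (Int.negOnePow j : ℤ) • actR m (A.d a)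

attribute [instance] DGBimod.acg
attribute [instance 2000] DGBimod.mod

/-- The diagonal bimodule: `A` viewed as a bimodule over itself. -/
def DGA.diag (A : DGA k) : DGBimod A where
  V := A.V
  gr := A.gr
  internal := A.internal
  d := A.d
  d_d := A.d_d
  d_gr := A.d_gr
  actL := A.mul
  actR := A.mul
  actL_one := A.one_mul'
  actR_one := A.mul_one'
  actL_mul := fun a b m => A.mul_assoc' a b m
  actR_mul := fun m a b => A.mul_assoc' m a b
  actLR := fun a m b => A.mul_assoc' a m b
  actL_gr := A.mul_gr
  actR_gr := A.mul_gr
  leibnizL := A.leibniz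
  leibnizR := A.leibniz

variable {A : DGA k}

/-- A homomorphism of dg bimodules of degree `s`: a linear map raising degree by `s`,
commuting with the differentials and the two actions. -/
def IsBHom (M N : DGBimod A) (s : ℤ) (f : M.V →ₗ[k] N.V) : Prop :=
  (∀ i, ∀ x ∈ M.gr i, f x ∈ N.gr (i + s)) ∧
  (∀ x, f (M.d x) = N.d (f x)) ∧
  (∀ a m, f (M.actL a m) = N.actL a (f m)) ∧
  (∀ m a, f (M.actR m a) = N.actR (f m) a)

/-- Graded maps of degree `s` compatible with the bimodule actions (no compatibility with the
differential required); these are used as homotopies. -/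
def grHomSub (M N : DGBimod A) (s : ℤ) : Submodule k (M.V →ₗ[k] N.V) where
  carrier := {f | (∀ i, ∀ x ∈ M.gr i, f x ∈ N.gr (i + s)) ∧
    (∀ a m, f (M.actL a m) = N.actL a (f m)) ∧
    (∀ m a, f (M.actR m a) = N.actR (f m) a)}
  add_mem' := by
    rintro f g ⟨hf1, hf2, hf3⟩ ⟨hg1, hg2, hg3⟩
    refine ⟨fun i x hx => ?_, fun a m => ?_, fun m a => ?_⟩ <;>
      simp [LinearMap.add_apply, hf2, hg2, hf3, hg3]
    exact Submodule.add_mem _ (hf1 i x hx) (hg1 i x hx)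
  zero_mem' := by
    refine ⟨fun i x hx => ?_, fun a m => ?_, fun m a => ?_⟩ <;> simp
  smul_mem' := by
    rintro c f ⟨hf1, hf2, hf3⟩
    refine ⟨fun i x hx => ?_, fun a m => ?_, fun m a => ?_⟩ <;>
      simp [LinearMap.smul_apply, hf2, hf3]
    exact Submodule.smul_mem _ _ (hf1 i x hx)

/-- Bimodule chain maps of degree `s`, as a submodule of all linear maps. -/
def bcmSub (M N : DGBimod A) (s : ℤ) : Submodule k (M.V →ₗ[k] N.V) where
  carrier := {f | IsBHom M N s f}
  add_mem' := by
    rintro f g ⟨hf1, hf0, hf2, hf3⟩ ⟨hg1, hg0, hg2, hg3⟩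
    refine ⟨fun i x hx => ?_, fun x => ?_, fun a m => ?_, fun m a => ?_⟩ <;>
      simp [LinearMap.add_apply, hf0, hg0, hf2, hg2, hf3, hg3]
    exact Submodule.add_mem _ (hf1 i x hx) (hg1 i x hx)
  zero_mem' := by
    refine ⟨fun i x hx => ?_, fun x => ?_, fun a m => ?_, fun m a => ?_⟩ <;> simp
  smul_mem' := by
    rintro c f ⟨hf1, hf0, hf2, hf3⟩
    refine ⟨fun i x hx => ?_, fun x => ?_, fun a m => ?_, fun m a => ?_⟩ <;>
      simp [LinearMap.smul_apply, hf0, hf2, hf3]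
    exact Submodule.smul_mem _ _ (hf1 i x hx)

/-- The nullhomotopic degree-`s` maps `d ∘ h + h ∘ d` for `h` a degree `s+1` bimodule map. -/
def nullHtpSub (M N : DGBimod A) (s : ℤ) : Submodule k (M.V →ₗ[k] N.V) :=
  Submodule.map
    ((LinearMap.llcomp k M.V N.V N.V N.d) + (LinearMap.lcomp k N.V M.d))
    (grHomSub M N (s + 1))

/-- Homotopy classes of degree-`s` bimodule chain maps `M → N`; for `M` a cell retract this
computes morphisms `Σ^s M → N` in the derived category of dg bimodules. -/
def HtpyHom (M N : DGBimod A) (s : ℤ) :=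
  bcmSub M N s ⧸ Submodule.comap (bcmSub M N s).subtype (nullHtpSub M N s)

instance (M N : DGBimod A) (s : ℤ) : AddCommGroup (HtpyHom M N s) :=
  inferInstanceAs (AddCommGroup (_ ⧸ _))
instance (M N : DGBimod A) (s : ℤ) : Module k (HtpyHom M N s) :=
  inferInstanceAs (Module k (_ ⧸ _))


/-- Homology in degree `n` of a graded module with "relations": the degree-`n` part of the
homology of the quotient complex `(T/N, d)` where the grading of `T/N` is induced by `gr`.
Taking `N = ⊥` gives ordinary graded homology. -/
def Hgr (T : Type) [AddCommGroup T] [Module k T] (gr : ℤ → Submodule k T)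
    (N : Submodule k T) (d : T →ₗ[k] T) (n : ℤ) : Type :=
  ↥((gr n ⊔ N) ⊓ Submodule.comap d N) ⧸
    Submodule.comap ((gr n ⊔ N) ⊓ Submodule.comap d N).subtype
      (Submodule.map d (gr (n + 1) ⊔ N) ⊔ N)

instance (T : Type) [AddCommGroup T] [Module k T] (gr : ℤ → Submodule k T)
    (N : Submodule k T) (d : T →ₗ[k] T) (n : ℤ) : AddCommGroup (Hgr T gr N d n) :=
  inferInstanceAs (AddCommGroup (_ ⧸ _))
instance (T : Type) [AddCommGroup T] [Module k T] (gr : ℤ → Submodule k T)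
    (N : Submodule k T) (d : T →ₗ[k] T) (n : ℤ) : Module k (Hgr T gr N d n) :=
  inferInstanceAs (Module k (_ ⧸ _))

/-- `f` induces an isomorphism on (graded) homology, with a degree shift `s`; stated
elementarily: the induced map on homology classes is surjective and injective. -/
def IsQIsoDeg (T S : Type) [AddCommGroup T] [Module k T] [AddCommGroup S] [Module k S]
    (grT : ℤ → Submodule k T) (grS : ℤ → Submodule k S)
    (dT : T →ₗ[k] T) (dS : S →ₗ[k] S) (s : ℤ) (f : T →ₗ[k] S) : Prop :=
  ∀ n : ℤ,
    (∀ y ∈ grS (n + s), dS y = 0 →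
      ∃ x ∈ grT n, dT x = 0 ∧ f x - y ∈ Submodule.map dS (grS (n + s + 1))) ∧
    (∀ x ∈ grT n, dT x = 0 → f x ∈ Submodule.map dS (grS (n + s + 1)) →
      x ∈ Submodule.map dT (grT (n + 1)))

variable {A : DGA k}

/-- The bilinear "sandwich" map `(a, b) ↦ a · m · b` for a fixed element `m` of a bimodule. -/
def sandwich (M : DGBimod A) (m : M.V) : A.V →ₗ[k] A.V →ₗ[k] M.V :=
  LinearMap.mk₂ k (fun a b => M.actR (M.actL a m) b)
    (fun a₁ a₂ b => by simp)
    (fun c a b => by simp)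
    (fun a b₁ b₂ => by simp)
    (fun c a b => by simp)

/-- The bimodule map `A ⊗ A → M`, `a ⊗ b ↦ a · m · b`. -/
def sandwichT (M : DGBimod A) (m : M.V) : (A.V ⊗[k] A.V) →ₗ[k] M.V :=
  TensorProduct.lift (sandwich M m)

/-- `S'/S` is a free dg bimodule: there is a family of "generators" `g i` of degrees `deg i`,
closed cycles modulo `S`, which generate `S'` freely over `A ⊗ A` modulo `S`. -/
def IsFreeStep (M : DGBimod A) (S S' : Submodule k M.V) : Prop :=
  ∃ (I : Type) (g : I → M.V) (deg : I → ℤ),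
    (∀ i, g i ∈ S') ∧ (∀ i, M.d (g i) ∈ S) ∧
    (∀ i p q, ∀ a ∈ A.gr p, ∀ b ∈ A.gr q, M.actR (M.actL a (g i)) b ∈ M.gr (p + q + deg i)) ∧
    S' ≤ S ⊔ (⨆ i, LinearMap.range (sandwichT M (g i))) ∧
    (∀ (u : Finset I) (c : I → A.V ⊗[k] A.V),
      (∑ i ∈ u, sandwichT M (g i) (c i)) ∈ S → ∀ i ∈ u, c i = 0)

/-- As `IsFreeStep`, with a finite generating family. -/
def IsFreeStepFin (M : DGBimod A) (S S' : Submodule k M.V) : Prop :=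
  ∃ (I : Type) (_ : Finite I) (g : I → M.V) (deg : I → ℤ),
    (∀ i, g i ∈ S') ∧ (∀ i, M.d (g i) ∈ S) ∧
    (∀ i p q, ∀ a ∈ A.gr p, ∀ b ∈ A.gr q, M.actR (M.actL a (g i)) b ∈ M.gr (p + q + deg i)) ∧
    S' ≤ S ⊔ (⨆ i, LinearMap.range (sandwichT M (g i))) ∧
    (∀ (u : Finset I) (c : I → A.V ⊗[k] A.V),
      (∑ i ∈ u, sandwichT M (g i) (c i)) ∈ S → ∀ i ∈ u, c i = 0)

/-- A filtration exhibiting `M` as a cell bimodule. -/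
def IsCellFiltration (M : DGBimod A) (Fil : ℕ → Submodule k M.V) : Prop :=
  Fil 0 = ⊥ ∧ Monotone Fil ∧ (⨆ n, Fil n) = ⊤ ∧
  (∀ n, ∀ x ∈ Fil n, M.d x ∈ Fil n) ∧
  (∀ n a, ∀ x ∈ Fil n, M.actL a x ∈ Fil n) ∧
  (∀ n a, ∀ x ∈ Fil n, M.actR x a ∈ Fil n) ∧
  (∀ n, IsFreeStep M (Fil n) (Fil (n + 1)))

/-- A cell bimodule: admits a filtration with free subquotients. -/
def IsCellBimod (M : DGBimod A) : Prop := ∃ Fil, IsCellFiltration M Fil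

/-- A finite cell bimodule: a finite filtration with finite-rank free subquotients. -/
def IsFiniteCellBimod (M : DGBimod A) : Prop :=
  ∃ Fil, (Fil 0 = ⊥ ∧ Monotone Fil ∧ (⨆ n, Fil n) = ⊤ ∧
    (∀ n, ∀ x ∈ Fil n, M.d x ∈ Fil n) ∧
    (∀ n a, ∀ x ∈ Fil n, M.actL a x ∈ Fil n) ∧
    (∀ n a, ∀ x ∈ Fil n, M.actR x a ∈ Fil n) ∧
    (∀ n, IsFreeStepFin M (Fil n) (Fil (n + 1)))) ∧ (∃ n₀, Fil n₀ = ⊤)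

/-- A (finite) cell retract: a subcomplex of a (finite) cell bimodule whose inclusion admits
a bimodule retraction. -/
def IsCellRetract (P : DGBimod A) : Prop :=
  ∃ (C : DGBimod A), IsCellBimod C ∧
    ∃ (ι : P.V →ₗ[k] C.V) (r : C.V →ₗ[k] P.V),
      IsBHom P C 0 ι ∧ IsBHom C P 0 r ∧ Function.Injective ι ∧ r.comp ι = LinearMap.id

def IsFiniteCellRetract (P : DGBimod A) : Prop :=
  ∃ (C : DGBimod A), IsFiniteCellBimod C ∧
    ∃ (ι : P.V →ₗ[k] C.V) (r : C.V →ₗ[k] P.V),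
      IsBHom P C 0 ι ∧ IsBHom C P 0 r ∧ Function.Injective ι ∧ r.comp ι = LinearMap.id

/-- `ρ : R → M` is a resolution: a quasi-isomorphism of dg bimodules from a cell retract. -/
def IsResolution (R M : DGBimod A) (ρ : R.V →ₗ[k] M.V) : Prop :=
  IsCellRetract R ∧ IsBHom R M 0 ρ ∧ IsQIsoDeg R.V M.V R.gr M.gr R.d M.d 0 ρ

/-- A bimodule is perfect if it admits a resolution by a finite cell retract. -/
def IsPerfect (M : DGBimod A) : Prop :=
  ∃ (R : DGBimod A) (ρ : R.V →ₗ[k] M.V),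
    IsFiniteCellRetract R ∧ IsBHom R M 0 ρ ∧ IsQIsoDeg R.V M.V R.gr M.gr R.d M.d 0 ρ

/-- `A` is homologically smooth: perfect as a bimodule over itself. -/
def HomSmooth (A : DGA k) : Prop := IsPerfect A.diag

/-- The homology of the dg algebra `A` in degree `n`. -/
abbrev AlgH (A : DGA k) (n : ℤ) := Hgr A.V A.gr ⊥ A.d n

/-- `A` is homologically proper: its total homology is finitely generated. -/
def HomProper (A : DGA k) : Prop :=
  (∀ n, Module.Finite k (AlgH A n)) ∧ (Set.Finite {n : ℤ | Nontrivial (AlgH A n)})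

/-- A dg bimodule is bounded if it is supported in finitely many gradings. -/
def BoundedBimod (M : DGBimod A) : Prop := ∃ u : Finset ℤ, ∀ i ∉ u, M.gr i = ⊥

/-! ### Bicomplexes and the spectral sequences of their two filtrations -/

/-- A bicomplex of `k`-modules "with relations", presented as one ambient module with a
bigrading by submodules, a horizontal differential `dh` (of bidegree `(-1,0)`), a vertical
differential `dv` (of bidegree `(0,-1)`) and a submodule `N` of relations (so that the actual
bicomplex is the quotient by `N`; take `N = ⊥` for an honest bicomplex). -/
structure RelBicx (k : Type) [CommRing k] : Type 1 where
  T : Type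
  [acg : AddCommGroup T]
  [mod : Module k T]
  gr : ℤ → ℤ → Submodule k T
  N : Submodule k T
  dh : T →ₗ[k] T
  dv : T →ₗ[k] T

attribute [instance] RelBicx.acg RelBicx.mod

namespace RelBicx

variable {k : Type} [CommRing k] (B : RelBicx k)

/-- The total differential. -/
def D : B.T →ₗ[k] B.T := B.dh + B.dv

/-- The column filtration (by the first index `p`) of the total complex, in total degree `n`. -/
def Fcol (p n : ℤ) : Submodule k B.T := ⨆ (i : ℤ) (_ : i ≤ p), B.gr i (n - i)

/-- The row filtration (by the second index `q`) of the total complex, in total degree `n`. -/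
def Frow (q n : ℤ) : Submodule k B.T := ⨆ (j : ℤ) (_ : j ≤ q), B.gr (n - j) j

/-- Approximate cycles for the spectral sequence of the filtration `F`:
elements of filtration `p` (mod `N`) whose total differential drops filtration by `r`. -/
def Zpage (F : ℤ → ℤ → Submodule k B.T) (r p n : ℤ) : Submodule k B.T :=
  (F p n ⊔ B.N) ⊓ Submodule.comap B.D (F (p - r) (n - 1) ⊔ B.N)

/-- The boundaries subobject for the `r`-th page at filtration `p`, total degree `n`. -/
def Bpage (F : ℤ → ℤ → Submodule k B.T) (r p n : ℤ) : Submodule k B.T :=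
  Submodule.map B.D (B.Zpage F (r - 1) (p + r - 1) (n + 1)) ⊔ B.Zpage F (r - 1) (p - 1) n ⊔ B.N

/-- The `r`-th page of the spectral sequence of the filtration `F`, at filtration degree `p`
and total degree `n` (the classical subquotient description `Z^r/B^r`). -/
def Epage (F : ℤ → ℤ → Submodule k B.T) (r p n : ℤ) : Type :=
  ↥(B.Zpage F r p n) ⧸
    Submodule.comap (B.Zpage F r p n).subtype (B.Bpage F r p n)

instance (F : ℤ → ℤ → Submodule k B.T) (r p n : ℤ) : AddCommGroup (B.Epage F r p n) :=
  inferInstanceAs (AddCommGroup (_ ⧸ _))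
instance (F : ℤ → ℤ → Submodule k B.T) (r p n : ℤ) : Module k (B.Epage F r p n) :=
  inferInstanceAs (Module k (_ ⧸ _))

/-- The spectral sequence `ᵛʰE` (filtration by columns; one first takes homology with respect
to the vertical differential). Indexing: `vhE r p q` is `ᵛʰE^r_{p,q}`. -/
def vhE (r p q : ℤ) : Type := B.Epage B.Fcol r p (p + q)

/-- The spectral sequence `ʰᵛE` (filtration by rows; one first takes homology with respect to
the horizontal differential), in the transposed indexing of Lipshitz–Treumann:
`hvE r p q` is `ʰᵛE^r_{p,q}`, whose filtration index is the row `q`. -/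
def hvE (r p q : ℤ) : Type := B.Epage B.Frow r q (p + q)

instance (r p q : ℤ) : AddCommGroup (B.vhE r p q) := inferInstanceAs (AddCommGroup (Epage _ _ _ _ _))
instance (r p q : ℤ) : Module k (B.vhE r p q) := inferInstanceAs (Module k (Epage _ _ _ _ _))
instance (r p q : ℤ) : AddCommGroup (B.hvE r p q) := inferInstanceAs (AddCommGroup (Epage _ _ _ _ _))
instance (r p q : ℤ) : Module k (B.hvE r p q) := inferInstanceAs (Module k (Epage _ _ _ _ _))

/-- Vanishing of the differential leaving the `r`-th page at position `(p, n)`: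
the total differential of any approximate cycle is, up to boundaries of earlier pages and
relations, an approximate cycle of deeper filtration. -/
def zeroDiff (F : ℤ → ℤ → Submodule k B.T) (r p n : ℤ) : Prop :=
  Submodule.map B.D (B.Zpage F r p n) ≤
    Submodule.map B.D (B.Zpage F (r - 1) (p - 1) n) ⊔ B.Zpage F (r - 1) (p - r - 1) (n - 1) ⊔ B.N

/-- The spectral sequence of the filtration `F` collapses at the `r₀`-th page. -/
def collapsesAt (F : ℤ → ℤ → Submodule k B.T) (r₀ : ℤ) : Prop :=
  ∀ r : ℤ, r₀ ≤ r → ∀ p n : ℤ, B.zeroDiff F r p n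

/-- The part of total degree `n` of the bicomplex. -/
def totGr (n : ℤ) : Submodule k B.T := ⨆ p : ℤ, B.gr p (n - p)

/-- The degree-`n` homology of the total complex (of the quotient by `N`). -/
def Htot (n : ℤ) : Type :=
  ↥((B.totGr n ⊔ B.N) ⊓ Submodule.comap B.D B.N) ⧸
    Submodule.comap ((B.totGr n ⊔ B.N) ⊓ Submodule.comap B.D B.N).subtype
      (Submodule.map B.D (B.totGr (n + 1) ⊔ B.N) ⊔ B.N)

instance (n : ℤ) : AddCommGroup (B.Htot n) := inferInstanceAs (AddCommGroup (_ ⧸ _))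
instance (n : ℤ) : Module k (B.Htot n) := inferInstanceAs (Module k (_ ⧸ _))

/-- The graded piece `F_p H_n / F_{p-1} H_n` of the filtration induced by `F` on the homology
of the total complex. -/
def grHtot (F : ℤ → ℤ → Submodule k B.T) (p n : ℤ) : Type :=
  ↥((F p n ⊔ B.N) ⊓ Submodule.comap B.D B.N) ⧸
    Submodule.comap ((F p n ⊔ B.N) ⊓ Submodule.comap B.D B.N).subtype
      (((F (p - 1) n ⊔ B.N) ⊓ Submodule.comap B.D B.N) ⊔
        Submodule.map B.D (B.totGr (n + 1) ⊔ B.N) ⊔ B.N)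

instance (F : ℤ → ℤ → Submodule k B.T) (p n : ℤ) : AddCommGroup (B.grHtot F p n) :=
  inferInstanceAs (AddCommGroup (_ ⧸ _))
instance (F : ℤ → ℤ → Submodule k B.T) (p n : ℤ) : Module k (B.grHtot F p n) :=
  inferInstanceAs (Module k (_ ⧸ _))

/-- The spectral sequence of the filtration `F` converges to the homology of the total
complex: for every position the pages eventually stabilize and agree with the associated
graded of the induced filtration on the homology of the total complex. -/
def convergesTo (F : ℤ → ℤ → Submodule k B.T) : Prop :=
  ∀ p n : ℤ, ∃ r₀ : ℤ, ∀ r : ℤ, r₀ ≤ r →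
    Nonempty (B.Epage F r p n ≃ₗ[k] B.grHtot F p n)

end RelBicx
/-! ### Hochschild chains, the involution `τ`, and the Hochschild–Tate bicomplex (over `𝔽₂`) -/

section Hochschild

variable {A : DGA (ZMod 2)} (R M : DGBimod A)

/-- The ambient space `R ⊗ M` of the Hochschild chain complex `HC(A, M)` (with respect to the
resolution `R` of the diagonal bimodule): `HC(A,M) = (R ⊗ M)/rel2`. -/
abbrev T2 := R.V ⊗[ZMod 2] M.V

/-- The differential `∂(r ⊗ m) = ∂r ⊗ m + r ⊗ ∂m` (char. 2). -/
def d2 : T2 R M →ₗ[ZMod 2] T2 R M :=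
  TensorProduct.map R.d LinearMap.id + TensorProduct.map LinearMap.id M.d

/-- The grading of `R ⊗ M`. -/
def gr2 (n : ℤ) : Submodule (ZMod 2) (T2 R M) :=
  Submodule.span (ZMod 2)
    {z | ∃ i j, ∃ r ∈ R.gr i, ∃ m ∈ M.gr j, i + j = n ∧ z = r ⊗ₜ[ZMod 2] m}

/-- The Hochschild relations `ra ⊗ m ∼ r ⊗ am` and `ar ⊗ m ∼ r ⊗ ma` (char. 2). -/
def rel2 : Submodule (ZMod 2) (T2 R M) :=
  Submodule.span (ZMod 2)
    ({z | ∃ r a m, z = (R.actR r a) ⊗ₜ[ZMod 2] m + r ⊗ₜ[ZMod 2] (M.actL a m)} ∪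
     {z | ∃ r a m, z = (R.actL a r) ⊗ₜ[ZMod 2] m + r ⊗ₜ[ZMod 2] (M.actR m a)})

/-- The underlying space of the Hochschild chain complex `HC(A, M)`. -/
abbrev HCQ := T2 R M ⧸ rel2 R M

/-- The Hochschild homology `HH_n(A, M)` (computed from the chosen resolution `R → A`). -/
abbrev HH (n : ℤ) := Hgr (T2 R M) (gr2 R M) (rel2 R M) (d2 R M) n

/-- The ambient space `R ⊗ (M ⊗ (R ⊗ M))` of the Hochschild chain complex of the derived
tensor product: `HC(A, M ⊗̃_A M) = (R ⊗ (M ⊠ R ⊠ M))/∼ = (R ⊗ M ⊗ R ⊗ M)/rel4`. -/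
abbrev T4 := R.V ⊗[ZMod 2] (M.V ⊗[ZMod 2] (R.V ⊗[ZMod 2] M.V))

/-- The differential of `R ⊗ M ⊗ R ⊗ M` (char. 2; no signs). -/
def d4 : T4 R M →ₗ[ZMod 2] T4 R M :=
  TensorProduct.map R.d LinearMap.id +
  TensorProduct.map LinearMap.id (TensorProduct.map M.d LinearMap.id +
    TensorProduct.map LinearMap.id (TensorProduct.map R.d LinearMap.id +
      TensorProduct.map LinearMap.id M.d))

/-- The grading of `R ⊗ M ⊗ R ⊗ M`. -/
def gr4 (n : ℤ) : Submodule (ZMod 2) (T4 R M) :=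
  Submodule.span (ZMod 2)
    {z | ∃ i₁ j₁ i₂ j₂, ∃ r ∈ R.gr i₁, ∃ m ∈ M.gr j₁, ∃ r' ∈ R.gr i₂, ∃ m' ∈ M.gr j₂,
      i₁ + j₁ + i₂ + j₂ = n ∧ z = r ⊗ₜ[ZMod 2] (m ⊗ₜ[ZMod 2] (r' ⊗ₜ[ZMod 2] m'))}

/-- The combined relations presenting `HC(A, M ⊗̃_A M)` as a quotient of `R ⊗ M ⊗ R ⊗ M`:
the two relations of the naive tensor products `M ⊠_A R ⊠_A M` and the two outer Hochschild
relations (char. 2). -/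
def rel4 : Submodule (ZMod 2) (T4 R M) :=
  Submodule.span (ZMod 2)
    ({z | ∃ r a m r' m', z = (R.actR r a) ⊗ₜ[ZMod 2] (m ⊗ₜ[ZMod 2] (r' ⊗ₜ[ZMod 2] m')) +
        r ⊗ₜ[ZMod 2] ((M.actL a m) ⊗ₜ[ZMod 2] (r' ⊗ₜ[ZMod 2] m'))} ∪
     {z | ∃ r a m r' m', z = (R.actL a r) ⊗ₜ[ZMod 2] (m ⊗ₜ[ZMod 2] (r' ⊗ₜ[ZMod 2] m')) +
        r ⊗ₜ[ZMod 2] (m ⊗ₜ[ZMod 2] (r' ⊗ₜ[ZMod 2] (M.actR m' a)))} ∪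
     {z | ∃ r a m r' m', z = r ⊗ₜ[ZMod 2] ((M.actR m a) ⊗ₜ[ZMod 2] (r' ⊗ₜ[ZMod 2] m')) +
        r ⊗ₜ[ZMod 2] (m ⊗ₜ[ZMod 2] ((R.actL a r') ⊗ₜ[ZMod 2] m'))} ∪
     {z | ∃ r a m r' m', z = r ⊗ₜ[ZMod 2] (m ⊗ₜ[ZMod 2] ((R.actR r' a) ⊗ₜ[ZMod 2] m')) +
        r ⊗ₜ[ZMod 2] (m ⊗ₜ[ZMod 2] (r' ⊗ₜ[ZMod 2] (M.actL a m')))})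


instance {A : DGA (ZMod 2)} (R M : DGBimod A) :
    HasQuotient (T4 R M) (Submodule (ZMod 2) (T4 R M)) := Submodule.hasQuotient

/-- The underlying space of the Hochschild chain complex `HC(A, M ⊗̃_A M)`. -/
abbrev HCQ4 := T4 R M ⧸ rel4 R M

/-- The Hochschild homology `HH_n(A, M ⊗̃_A M)` of the derived tensor square. -/
abbrev HH4 (n : ℤ) := Hgr (T4 R M) (gr4 R M) (rel4 R M) (d4 R M) n

/-- The involution `τ` of `R ⊗ (M ⊗ (R ⊗ M))` exchanging the two halves:
`r ⊗ (m ⊗ (r' ⊗ m')) ↦ r' ⊗ (m' ⊗ (r ⊗ m))`. -/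
def tau4 : T4 R M →ₗ[ZMod 2] T4 R M :=
  ((TensorProduct.assoc (ZMod 2) R.V M.V (R.V ⊗[ZMod 2] M.V)).toLinearMap).comp
    (((TensorProduct.comm (ZMod 2) (R.V ⊗[ZMod 2] M.V) (R.V ⊗[ZMod 2] M.V)).toLinearMap).comp
      ((TensorProduct.assoc (ZMod 2) R.V M.V (R.V ⊗[ZMod 2] M.V)).symm.toLinearMap))

/-- The Hochschild–Tate bicomplex `HC^{Tate}(A, M ⊗̃_A M)`: the `ℤ`-periodic bicomplex whose
columns are the Hochschild complex of `M ⊗̃_A M` and whose horizontal differential is `1 + τ`. -/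
def TateBicx : RelBicx (ZMod 2) where
  T := ℤ →₀ T4 R M
  gr := fun p q => Submodule.map (Finsupp.lsingle p) (gr4 R M q)
  N := ⨅ p : ℤ, Submodule.comap (Finsupp.lapply p) (rel4 R M)
  dv := Finsupp.mapRange.linearMap (d4 R M)
  dh := (Finsupp.lmapDomain (T4 R M) (ZMod 2) (fun p => p - 1)).comp
    (Finsupp.mapRange.linearMap (LinearMap.id + tau4 R M))


/-- An element of the Hochschild–Tate bicomplex concentrated in column `p`. -/
def tateSingle (p : ℤ) (x : T4 R M) : (TateBicx R M).T := Finsupp.single p x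

/-- A dg bimodule `M` is `π`-formal (with respect to the resolution `R` of the diagonal
bimodule) if the spectral sequence `ʰᵛE` of the Hochschild–Tate bicomplex of `M ⊗̃_A M`
collapses at the `E³`-page; equivalently, all the induced operations
`d^{2i} : HH_k(A,M) → HH_{k-i}(A,M)`, `i ≥ 2`, vanish. -/
def PiFormalBimod : Prop := (TateBicx R M).collapsesAt (TateBicx R M).Frow 3

/-- A dg algebra is `π`-formal if every dg bimodule over it is `π`-formal. -/
def PiFormalAlg (R : DGBimod A) : Prop := ∀ M : DGBimod A, PiFormalBimod R M

end Hochschild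

/-! ### Cyclic modules over `𝔽₂` -/

/-- A cyclic module over `𝔽₂` (a functor on Connes's cyclic category `ΔC`): vector spaces
`X n`, face maps `d n i : X (n+1) → X n` (`0 ≤ i ≤ n+1`), degeneracies
`s n i : X n → X (n+1)` (`0 ≤ i ≤ n`), and cyclic operators `t n` generating a
`ℤ/(n+1)`-action, subject to the cyclic identities. (Face and degeneracy maps for indices out
of range are unconstrained junk data.) -/
structure CycMod : Type 1 where
  X : ℕ → Type
  [acg : ∀ n, AddCommGroup (X n)]
  [mod : ∀ n, Module (ZMod 2) (X n)]
  d : ∀ n : ℕ, ℕ → (X (n + 1) →ₗ[ZMod 2] X n)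
  s : ∀ n : ℕ, ℕ → (X n →ₗ[ZMod 2] X (n + 1))
  t : ∀ n : ℕ, X n →ₗ[ZMod 2] X n
  dd : ∀ n i j, i < j → j ≤ n + 2 →
    (d n i).comp (d (n + 1) j) = (d n (j - 1)).comp (d (n + 1) i)
  ss : ∀ n i j, i ≤ j → j ≤ n →
    (s (n + 1) i).comp (s n j) = (s (n + 1) (j + 1)).comp (s n i)
  ds_lt : ∀ n i j, i < j → j ≤ n + 1 →
    (d (n + 1) i).comp (s (n + 1) j) = (s n (j - 1)).comp (d n i)
  ds_eq : ∀ n j, j ≤ n →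
    (d n j).comp (s n j) = LinearMap.id ∧ (d n (j + 1)).comp (s n j) = LinearMap.id
  ds_gt : ∀ n i j, j + 1 < i → i ≤ n + 2 →
    (d (n + 1) i).comp (s (n + 1) j) = (s n j).comp (d n (i - 1))
  t_ord : ∀ n, (t n) ^ (n + 1) = LinearMap.id
  dt : ∀ n i, 1 ≤ i → i ≤ n + 1 → (d n i).comp (t (n + 1)) = (t n).comp (d n (i - 1))
  d0t : ∀ n, (d n 0).comp (t (n + 1)) = d n (n + 1)
  st : ∀ n i, 1 ≤ i → i ≤ n → (s n i).comp (t n) = (t (n + 1)).comp (s n (i - 1))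
  s0t : ∀ n, (s n 0).comp (t n) = ((t (n + 1)).comp (t (n + 1))).comp (s n n)

attribute [instance] CycMod.acg CycMod.mod

namespace CycMod

variable (C : CycMod)

/-- The Hochschild differential `∂ = ∑_{i=0}^{n+1} d_i : X_{n+1} → X_n`. -/
def bd (n : ℕ) : C.X (n + 1) →ₗ[ZMod 2] C.X n := ∑ i ∈ Finset.range (n + 2), C.d n i

/-- The bar differential `b' = ∑_{i=0}^{n} d_i : X_{n+1} → X_n`. -/
def bd' (n : ℕ) : C.X (n + 1) →ₗ[ZMod 2] C.X n := ∑ i ∈ Finset.range (n + 1), C.d n i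

/-- Hochschild cycles. -/
def cyc : ∀ n : ℕ, Submodule (ZMod 2) (C.X n)
  | 0 => ⊤
  | (m + 1) => LinearMap.ker (C.bd m)

/-- The Hochschild homology `HH_n(𝓜)` of a cyclic module. -/
def HHc (n : ℕ) : Type :=
  ↥(C.cyc n) ⧸ Submodule.comap (C.cyc n).subtype (LinearMap.range (C.bd n))

instance (n : ℕ) : AddCommGroup (C.HHc n) := inferInstanceAs (AddCommGroup (_ ⧸ _))
instance (n : ℕ) : Module (ZMod 2) (C.HHc n) := inferInstanceAs (Module (ZMod 2) (_ ⧸ _))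

/-- A cyclic module is bounded if its Hochschild homology vanishes in all but finitely many
degrees. -/
def Bounded : Prop := Set.Finite {n : ℕ | Nontrivial (C.HHc n)}

/-- The cyclic bicomplex `CC(𝓜)`: first-quadrant, columns alternately `(HC, ∂)` and
`(HC, b')`, horizontal maps alternately `1 - t` and `N = ∑ tⁱ` (char. 2). Its column
filtration spectral sequence is the Hodge-to-de Rham (Hochschild-to-cyclic) spectral
sequence, converging to cyclic homology. -/
def CC : RelBicx (ZMod 2) where
  T := Π₀ pq : ℕ × ℕ, C.X pq.2
  gr := fun p q =>
    if 0 ≤ p ∧ 0 ≤ q then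
      Submodule.map (DFinsupp.lsingle (p.toNat, q.toNat)) ⊤
    else ⊥
  N := ⊥
  dv := DFinsupp.lsum ℕ (fun pq =>
    match pq with
    | (_, 0) => 0
    | (p, q + 1) =>
      (DFinsupp.lsingle (p, q)).comp (if Even p then C.bd q else C.bd' q))
  dh := DFinsupp.lsum ℕ (fun pq =>
    match pq with
    | (0, _) => 0
    | (p + 1, q) =>
      (DFinsupp.lsingle (p, q)).comp
        (if Even p then LinearMap.id + C.t q
         else ∑ i ∈ Finset.range (q + 1), (C.t q) ^ i))

/-- Degeneration of the Hodge-to-de Rham spectral sequence of `𝓜` at the `E^{r₀}` page. -/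
def HdRdegenAt (r₀ : ℤ) : Prop := C.CC.collapsesAt C.CC.Fcol r₀

end CycMod

/-- A map of cyclic modules. -/
def IsCycHom (C D : CycMod) (f : ∀ n, C.X n →ₗ[ZMod 2] D.X n) : Prop :=
  (∀ n i, (f n).comp (C.d n i) = (D.d n i).comp (f (n + 1))) ∧
  (∀ n i, (f (n + 1)).comp (C.s n i) = (D.s n i).comp (f n)) ∧
  (∀ n, (f n).comp (C.t n) = (D.t n).comp (f n))

/-- A degreewise map of `ℕ`-indexed chain complexes induces an isomorphism on homology
(stated elementarily). -/
def IsNatQIso (X Y : ℕ → Type)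
    [∀ n, AddCommGroup (X n)] [∀ n, Module (ZMod 2) (X n)]
    [∀ n, AddCommGroup (Y n)] [∀ n, Module (ZMod 2) (Y n)]
    (dX : ∀ n, X (n + 1) →ₗ[ZMod 2] X n) (dY : ∀ n, Y (n + 1) →ₗ[ZMod 2] Y n)
    (f : ∀ n, X n →ₗ[ZMod 2] Y n) : Prop :=
  ((∀ y : Y 0, ∃ x : X 0, f 0 x - y ∈ LinearMap.range (dY 0)) ∧
    (∀ x : X 0, f 0 x ∈ LinearMap.range (dY 0) → x ∈ LinearMap.range (dX 0))) ∧
  (∀ n : ℕ,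
    (∀ y : Y (n + 1), dY n y = 0 →
      ∃ x : X (n + 1), dX n x = 0 ∧ f (n + 1) x - y ∈ LinearMap.range (dY (n + 1))) ∧
    (∀ x : X (n + 1), dX n x = 0 → f (n + 1) x ∈ LinearMap.range (dY (n + 1)) →
      x ∈ LinearMap.range (dX (n + 1))))

/-- A quasi-isomorphism of cyclic modules. -/
def IsCycQIso (C D : CycMod) (f : ∀ n, C.X n →ₗ[ZMod 2] D.X n) : Prop :=
  IsCycHom C D f ∧ IsNatQIso C.X D.X C.bd D.bd f

namespace CycMod

variable (C : CycMod)

/-- `Π_n(𝓜) = ⊕_{p=0}^{n} HC_{n+1}(𝓜)`. -/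
abbrev PiX (n : ℕ) : Type := Fin (n + 1) → C.X (n + 1)

/-- The differential of `Π(𝓜)`: on the summand indexed by `p` (with `q = n - p`),
`∂(x) = (∑_{i=0}^{p} d_i x)_{(p-1,q)} + (∑_{j=p+1}^{p+q+1} d_j x)_{(p,q-1)}`, omitting the
first sum if `p = 0` and the second if `q = 0`. -/
def bdPi (n : ℕ) : C.PiX (n + 1) →ₗ[ZMod 2] C.PiX n :=
  LinearMap.pi (fun p : Fin (n + 1) =>
    ((∑ j ∈ Finset.Icc ((p : ℕ) + 1) (n + 2), C.d (n + 1) j).comp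
      (LinearMap.proj (Fin.castSucc p))) +
    ((∑ i ∈ Finset.range ((p : ℕ) + 2), C.d (n + 1) i).comp
      (LinearMap.proj (Fin.succ p))))

/-- The augmentation `ε(x_0, …, x_n) = d_n(x_n) : Π_n(𝓜) → HC_n(𝓜)`. -/
def eps (n : ℕ) : C.PiX n →ₗ[ZMod 2] C.X n :=
  (C.d n n).comp (LinearMap.proj (Fin.last n))

end CycMod

namespace CycMod

variable (C : CycMod)

/-- The involution `τ(x_0,…,x_n) = (t x_n, t² x_{n-1}, …, t^{n+1} x_0)` of `Π_n(𝓜)`. -/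
def tauPi (n : ℕ) : C.PiX n →ₗ[ZMod 2] C.PiX n :=
  LinearMap.pi (fun p : Fin (n + 1) =>
    ((C.t (n + 1)) ^ ((p : ℕ) + 1)).comp (LinearMap.proj (Fin.rev p)))

/-- The first-quadrant bicomplex `Π^{ℤ/2}`: columns `Π_*(𝓜)` for `p ≥ 0`, vertical
differential `∂_Π` and horizontal differential `1 + τ`. -/
def PiZhalf : RelBicx (ZMod 2) where
  T := Π₀ pq : ℤ × ℕ, C.PiX pq.2
  gr := fun p q =>
    if 0 ≤ p ∧ 0 ≤ q then Submodule.map (DFinsupp.lsingle (p, q.toNat)) ⊤ else ⊥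
  N := ⊥
  dv := DFinsupp.lsum ℕ (fun pq =>
    match pq with
    | (_, 0) => 0
    | (p, q + 1) => (DFinsupp.lsingle (p, q)).comp (C.bdPi q))
  dh := DFinsupp.lsum ℕ (fun pq =>
    if pq.1 ≤ 0 then 0
    else (DFinsupp.lsingle (pq.1 - 1, pq.2)).comp (LinearMap.id + C.tauPi pq.2))

/-- The `ℤ`-periodic bicomplex `Π^{Tate}`: columns `Π_*(𝓜)` for all `p ∈ ℤ`, vertical
differential `∂_Π` and horizontal differential `1 + τ`. -/
def PiTate : RelBicx (ZMod 2) where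
  T := Π₀ pq : ℤ × ℕ, C.PiX pq.2
  gr := fun p q =>
    if 0 ≤ q then Submodule.map (DFinsupp.lsingle (p, q.toNat)) ⊤ else ⊥
  N := ⊥
  dv := DFinsupp.lsum ℕ (fun pq =>
    match pq with
    | (_, 0) => 0
    | (p, q + 1) => (DFinsupp.lsingle (p, q)).comp (C.bdPi q))
  dh := DFinsupp.lsum ℕ (fun pq =>
    (DFinsupp.lsingle (pq.1 - 1, pq.2)).comp (LinearMap.id + C.tauPi pq.2))

end CycMod

/-!
In a bicomplex, the spectral sequence that first takes vertical homology degenerates at the first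
page if and only if every cycle of a column starts zigzags of any length: sequences with
`dh zᵢ + dv zᵢ₊₁ = 0`, going down an antidiagonal. By the 2-periodicity of `CC(𝓜)`, the hypothesis
thus says that every Hochschild cycle, placed in an even column far enough to the right, starts
a zigzag of any given length in `CC(𝓜)`.

To carry these zigzags over to `Π`, let `s = t s_n` be the extra degeneracy, for which
`∂ s + s b' = 1 + t`. The map `σ = (s_0, …, s_n)` is a chain map `HC(𝓜) → Π(𝓜)` inducing a
surjection on homology, and `f = (s_p s N_p)_p`, where `N_p = t^p + ⋯ + t^n`, satisfies
`∂_Π f + f ∂ = (1 + τ) σ`, `(1 + τ) f = σ s N` and `(1 + τ) σ s = f (1 + t)`. Hence a zigzag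
`y₀, y₁, …` in `CC(𝓜)` yields the zigzag `σ y₀, f y₀, σ (y₂ + s y₁), f y₂, …` in `Π`. Every cycle
of `Π(𝓜)` is of the form `σ y₀ + ∂_Π w`, and the boundary starts the zigzag
`∂_Π w, (1 + τ) w, 0, …`.
-/

/-! ### Degeneration and zigzags -/

namespace RelBicx

variable {k : Type} [CommRing k] {B : RelBicx k}

theorem gr_le_Fcol {i p q n : ℤ} (hip : i ≤ p) (hn : i + q = n) : B.gr i q ≤ B.Fcol p n := by
  obtain rfl : q = n - i := by omega
  exact le_iSup₂_of_le i hip le_rfl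

theorem Fcol_mono {p p' n : ℤ} (h : p ≤ p') : B.Fcol p n ≤ B.Fcol p' n :=
  iSup₂_le fun _ hi => gr_le_Fcol (hi.trans h) (by ring)

theorem exists_add_of_mem_Fcol {p q n : ℤ} (hn : p + q = n) {x : B.T} (hx : x ∈ B.Fcol p n) :
    ∃ y ∈ B.gr p q, ∃ w ∈ B.Fcol (p - 1) n, y + w = x := by
  obtain rfl : q = n - p := by omega
  suffices h : B.Fcol p n ≤ B.gr p (n - p) ⊔ B.Fcol (p - 1) n from Submodule.mem_sup.1 (h hx)
  refine iSup₂_le fun i hi => ?_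
  rcases hi.eq_or_lt with rfl | hi
  · exact le_sup_left
  · exact le_sup_of_le_right (gr_le_Fcol (by omega) (by ring))

/-- An honest bicomplex: there are no relations, the sum of the bihomogeneous parts is direct,
and `dh`, `dv` have bidegrees `(-1, 0)`, `(0, -1)`. The differentials are not required to square
to zero. -/
structure IsBigraded (B : RelBicx k) : Prop where
  rel_eq_bot : B.N = ⊥
  independent : iSupIndep fun pq : ℤ × ℤ => B.gr pq.1 pq.2
  dh_mem : ∀ {p q : ℤ} {x : B.T}, x ∈ B.gr p q → B.dh x ∈ B.gr (p - 1) q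
  dv_mem : ∀ {p q : ℤ} {x : B.T}, x ∈ B.gr p q → B.dv x ∈ B.gr p (q - 1)

namespace IsBigraded

theorem eq_zero_of_mem_Fcol (hB : B.IsBigraded) {p p' q n : ℤ} (hp : p' < p) (hn : p + q = n)
    {x : B.T} (hx : x ∈ B.gr p q) (hx' : x ∈ B.Fcol p' n) : x = 0 := by
  refine Submodule.disjoint_def.1 (hB.independent (p, q)) x hx
    ((iSup₂_le fun i hi => ?_ : B.Fcol p' n ≤ _) hx')
  exact le_iSup₂_of_le (f := fun (j : ℤ × ℤ) (_ : j ≠ (p, q)) => B.gr j.1 j.2) (i, n - i)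
    (fun h => by simp only [Prod.mk.injEq] at h; omega) le_rfl

theorem D_mem_Fcol (hB : B.IsBigraded) {p n : ℤ} {x : B.T} (hx : x ∈ B.Fcol p n) :
    B.D x ∈ B.Fcol p (n - 1) := by
  suffices h : B.Fcol p n ≤ (B.Fcol p (n - 1)).comap B.D from h hx
  exact iSup₂_le fun i hi y hy => Submodule.add_mem _
    (gr_le_Fcol (by omega) (by ring) (hB.dh_mem hy)) (gr_le_Fcol hi (by ring) (hB.dv_mem hy))

end IsBigraded

/-- A zigzag of length `R` starting in bidegree `(p, q)`: a sequence going down the antidiagonal,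
one column at a time, in which the vertical differential of each term cancels the horizontal
differential of the preceding one. -/
structure IsZigzag (B : RelBicx k) (p q : ℤ) (R : ℕ) (z : ℕ → B.T) : Prop where
  mem : ∀ i : ℕ, z i ∈ B.gr (p - i) (q + i)
  step : ∀ i < R, B.dh (z i) + B.dv (z (i + 1)) = 0

namespace IsZigzag

variable {p q : ℤ} {R : ℕ} {z : ℕ → B.T}

theorem D_sum (hz : B.IsZigzag p q R z) (h0 : B.dv (z 0) = 0) :
    B.D (∑ i ∈ Finset.range (R + 1), z i) = B.dh (z R) := by
  have hsum : ∑ i ∈ Finset.range R, B.dh (z i) + ∑ i ∈ Finset.range R, B.dv (z (i + 1)) = 0 := by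
    rw [← Finset.sum_add_distrib]
    exact Finset.sum_eq_zero fun i hi => hz.step i (Finset.mem_range.1 hi)
  rw [D, LinearMap.add_apply, map_sum, map_sum, Finset.sum_range_succ,
    Finset.sum_range_succ' fun i => B.dv (z i), h0, add_zero, add_right_comm, hsum, zero_add]

theorem cons (hz : B.IsZigzag (p - 1) (q + 1) R z) {x : B.T} (hx : x ∈ B.gr p q)
    (h : B.dh x + B.dv (z 0) = 0) : B.IsZigzag p q (R + 1) (fun | 0 => x | i + 1 => z i) where
  mem
    | 0 => by simpa using hx
    | i + 1 => by
      have e : p - 1 - i = p - (i + 1 : ℕ) ∧ q + 1 + i = q + (i + 1 : ℕ) := by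
        push_cast; constructor <;> ring
      exact e.1 ▸ e.2 ▸ hz.mem i
  step
    | 0, _ => h
    | i + 1, hi => hz.step i (by omega)

theorem sum_sub_mem_Fcol (hz : B.IsZigzag p q R z) :
    ∑ i ∈ Finset.range (R + 1), z i - z 0 ∈ B.Fcol (p - 1) (p + q) := by
  rw [Finset.sum_range_succ', add_sub_cancel_right]
  exact Submodule.sum_mem _ fun i _ =>
    gr_le_Fcol (by push_cast; omega) (by ring) (hz.mem (i + 1))

end IsZigzag

namespace IsBigraded

/-- Peel off the components of `w` one column at a time: the top component of
`dh x + D w` is `dh x + dv y` for `y` the top component of `w`. -/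
theorem exists_isZigzag_of_dh_add_D_mem (hB : B.IsBigraded) (R : ℕ) {p q : ℤ} {x w : B.T}
    (hx : x ∈ B.gr p q) (hw : w ∈ B.Fcol (p - 1) (p + q))
    (h : B.dh x + B.D w ∈ B.Fcol (p - 1 - R) (p + q - 1)) :
    ∃ z, z 0 = x ∧ B.IsZigzag p q R z := by
  induction R generalizing p q x w with
  | zero =>
    refine ⟨fun | 0 => x | _ + 1 => 0, rfl, ⟨?_, by simp⟩⟩
    rintro (_ | i)
    · simpa using hx
    · exact zero_mem _
  | succ R ih =>
    obtain ⟨y, hy, w', hw', rfl⟩ := exists_add_of_mem_Fcol (q := q + 1) (by ring) hw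
    have split : B.dh x + B.D (y + w') = (B.dh x + B.dv y) + (B.dh y + B.D w') := by
      simp only [map_add, D, LinearMap.add_apply]; abel
    have hrest : B.dh y + B.D w' ∈ B.Fcol (p - 1 - 1) (p + q - 1) :=
      Submodule.add_mem _ (gr_le_Fcol le_rfl (by ring) (hB.dh_mem hy)) (hB.D_mem_Fcol hw')
    have hstep : B.dh x + B.dv y = 0 := by
      refine hB.eq_zero_of_mem_Fcol (p' := p - 1 - 1) (n := p + q - 1) (sub_one_lt _) (by ring)
        (Submodule.add_mem _ (hB.dh_mem hx) (by simpa using hB.dv_mem hy)) ?_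
      rw [eq_sub_of_add_eq split.symm]
      exact Submodule.sub_mem _ (Fcol_mono (by push_cast; omega) h) hrest
    rw [split, hstep, zero_add] at h
    have hpq : p - 1 + (q + 1) = p + q := by ring
    obtain ⟨z, rfl, hz⟩ := ih hy (w := w') (hpq ▸ hw')
      (by rw [hpq]; exact Fcol_mono (by push_cast; omega) h)
    exact ⟨_, rfl, hz.cons hx hstep⟩

theorem exists_D_mem_Fcol_of_collapsesAt_one (hB : B.IsBigraded) (hc : B.collapsesAt B.Fcol 1)
    {p q : ℤ} {x : B.T} (hx : x ∈ B.gr p q) (h0 : B.dv x = 0) (R : ℕ) :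
    ∃ w ∈ B.Fcol (p - 1) (p + q), B.D (x + w) ∈ B.Fcol (p - 1 - R) (p + q - 1) := by
  induction R with
  | zero =>
    refine ⟨0, zero_mem _, ?_⟩
    rw [add_zero, D, LinearMap.add_apply, h0, add_zero]
    exact gr_le_Fcol (by simp) (by ring) (hB.dh_mem hx)
  | succ R ih =>
    obtain ⟨w, hw, hD⟩ := ih
    have hxw : x + w ∈ B.Fcol p (p + q) :=
      Submodule.add_mem _ (gr_le_Fcol le_rfl rfl hx) (Fcol_mono (by omega) hw)
    have hz := hc (R + 1) (by omega) p (p + q)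
    simp only [zeroDiff, Zpage, hB.rel_eq_bot, sup_bot_eq] at hz
    obtain ⟨_, ⟨w', hw', rfl⟩, u, hu, hs⟩ := Submodule.mem_sup.1
      (hz (Submodule.mem_map_of_mem ⟨hxw, Fcol_mono (by omega) hD⟩))
    refine ⟨w - w', Submodule.sub_mem _ hw hw'.1, ?_⟩
    rw [← add_sub_assoc, map_sub, ← hs, add_sub_cancel_left]
    exact Fcol_mono (by push_cast; omega) hu.1

theorem zeroDiff_of_exists_isZigzag (hB : B.IsBigraded)
    (h : ∀ p q : ℤ, ∀ x ∈ B.gr p q, B.dv x = 0 → ∀ R, ∃ z, z 0 = x ∧ B.IsZigzag p q R z)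
    {r : ℤ} (hr : 1 ≤ r) (p n : ℤ) : B.zeroDiff B.Fcol r p n := by
  rintro _ ⟨x, hx, rfl⟩
  simp only [Zpage, hB.rel_eq_bot, sup_bot_eq] at hx ⊢
  obtain ⟨hxF, hDx : B.D x ∈ B.Fcol (p - r) (n - 1)⟩ := hx
  obtain ⟨q, rfl⟩ : ∃ q, p + q = n := ⟨n - p, by ring⟩
  obtain ⟨y, hy, w, hw, rfl⟩ := exists_add_of_mem_Fcol rfl hxF
  have hdv : B.dv y = 0 := by
    refine hB.eq_zero_of_mem_Fcol (n := p + q - 1) (sub_one_lt p) (by ring) (hB.dv_mem hy) ?_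
    rw [show B.dv y = B.D (y + w) - B.dh y - B.D w by
      simp only [map_add, D, LinearMap.add_apply]; abel]
    exact Submodule.sub_mem _ (Submodule.sub_mem _ (Fcol_mono (by omega) hDx)
      (gr_le_Fcol le_rfl (by ring) (hB.dh_mem hy))) (hB.D_mem_Fcol hw)
  obtain ⟨R, hR⟩ : ∃ R : ℕ, (R : ℤ) = 2 * r := ⟨(2 * r).toNat, by omega⟩
  obtain ⟨z, rfl, hz⟩ := h p q y hy hdv R
  set v := ∑ i ∈ Finset.range (R + 1), z i with hv
  have hDv : B.D v ∈ B.Fcol (p - 2 * r) (p + q - 1) := by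
    rw [hv, hz.D_sum hdv]
    exact gr_le_Fcol (by omega) (by ring) (hB.dh_mem (hz.mem R))
  have hsub : z 0 + w - v ∈ B.Fcol (p - 1) (p + q) := by
    rw [show z 0 + w - v = w - (v - z 0) by abel]
    exact Submodule.sub_mem _ hw hz.sum_sub_mem_Fcol
  rw [← sub_add_cancel (z 0 + w) v, map_add]
  refine Submodule.add_mem_sup (Submodule.mem_map_of_mem ⟨hsub, ?_⟩)
    ⟨Fcol_mono (by omega) hDv, Fcol_mono (by omega) (hB.D_mem_Fcol hDv)⟩
  change B.D (z 0 + w - v) ∈ B.Fcol (p - 1 - (r - 1)) (p + q - 1)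
  rw [map_sub]
  exact Submodule.sub_mem _ (Fcol_mono (by omega) hDx) (Fcol_mono (by omega) hDv)

theorem collapsesAt_one_iff_exists_isZigzag (hB : B.IsBigraded) :
    B.collapsesAt B.Fcol 1 ↔
      ∀ p q : ℤ, ∀ x ∈ B.gr p q, B.dv x = 0 → ∀ R, ∃ z, z 0 = x ∧ B.IsZigzag p q R z := by
  refine ⟨fun hc p q x hx h0 R => ?_, fun h r hr p n => hB.zeroDiff_of_exists_isZigzag h hr p n⟩
  obtain ⟨w, hw, hD⟩ := hB.exists_D_mem_Fcol_of_collapsesAt_one hc hx h0 R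
  refine hB.exists_isZigzag_of_dh_add_D_mem R hx hw ?_
  simpa only [map_add, D, LinearMap.add_apply, h0, add_zero] using hD

end IsBigraded

end RelBicx

/-! ### Bicomplexes given by their columns -/

section Columns

variable {k : Type} [CommRing k] {Y : ℕ → Type} [∀ q, AddCommGroup (Y q)] [∀ q, Module k (Y q)]

/-- The cycles of a sequence of maps `δ q : Y (q + 1) → Y q`, everything being a cycle in
degree `0`. -/
def cycles (δ : ∀ q, Y (q + 1) →ₗ[k] Y q) : ∀ q, Submodule k (Y q)
  | 0 => ⊤
  | q + 1 => LinearMap.ker (δ q)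

variable (k Y) in
/-- The differentials of a bicomplex with nonnegative rows in which every column has the terms
`Y q`: `vert p` is the differential of column `p`, and `horiz p` goes from column `p` to column
`p - 1`. -/
structure ColumnDifferentials where
  vert : ℤ → ∀ q, Y (q + 1) →ₗ[k] Y q
  horiz : ℤ → ∀ q, Y q →ₗ[k] Y q

theorem iSupIndep_of_apply_eq_zero_or {ι κ : Type*} {M : ι → Type*} [∀ i, AddCommGroup (M i)]
    [∀ i, Module k (M i)] {G : κ → Submodule k (Π₀ i, M i)}
    (h : ∀ j l, j ≠ l → ∀ x ∈ G j, ∀ y ∈ G l, ∀ i, x i = 0 ∨ y i = 0) : iSupIndep G := by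
  refine fun j => Submodule.disjoint_def.2 fun x hx hx' => DFinsupp.ext fun i => ?_
  by_contra hi
  suffices hle : ⨆ l, ⨆ (_ : l ≠ j), G l ≤ LinearMap.ker (DFinsupp.lapply i) from hi (hle hx')
  exact iSup₂_le fun l hl y hy => (h j l hl.symm x hx y hy i).resolve_left hi

namespace ColumnDifferentials

variable (E : ColumnDifferentials k Y)

/-- The component form of `RelBicx.IsZigzag`. -/
def IsZigzag (p : ℤ) (q R : ℕ) (y : ∀ i, Y (q + i)) : Prop :=
  ∀ i < R, E.horiz (p - i) (q + i) (y i) + E.vert (p - (i + 1 : ℕ)) (q + i) (y (i + 1)) = 0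

variable {E} in
theorem IsZigzag.add {p : ℤ} {q R : ℕ} {y z : ∀ i, Y (q + i)} (hy : E.IsZigzag p q R y)
    (hz : E.IsZigzag p q R z) : E.IsZigzag p q R (y + z) := fun i hi => by
  rw [Pi.add_apply, Pi.add_apply, map_add, map_add, add_add_add_comm, hy i hi, hz i hi, add_zero]

/-- The maps `ι p q` identify `B` with the bicomplex having the terms `Y q` and the differentials
`E` in the columns `p ∈ P`, and zero in the other columns. -/
structure IsPresentation (P : Set ℤ) (B : RelBicx k) (ι : ∀ (_ : ℤ) q, Y q →ₗ[k] B.T) : Prop where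
  rel_eq_bot : B.N = ⊥
  independent : iSupIndep fun pq : ℤ × ℤ => B.gr pq.1 pq.2
  gr_natCast : ∀ (p : ℤ) (q : ℕ), B.gr p q = LinearMap.range (ι p q)
  gr_of_neg : ∀ p {q : ℤ}, q < 0 → B.gr p q = ⊥
  dv_zero : ∀ p y, B.dv (ι p 0 y) = 0
  dv_succ : ∀ p q y, B.dv (ι p (q + 1) y) = ι p q (E.vert p q y)
  dh_apply : ∀ p q y, B.dh (ι p q y) = ι (p - 1) q (E.horiz p q y)
  injective : ∀ {p}, p ∈ P → ∀ q, Function.Injective (ι p q)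
  eq_zero : ∀ {p}, p ∉ P → ∀ q, ι p q = 0

namespace IsPresentation

variable {E} {P : Set ℤ} {B : RelBicx k} {ι : ∀ (_ : ℤ) q, Y q →ₗ[k] B.T}

theorem exists_of_mem_gr (h : E.IsPresentation P B ι) {p q : ℤ} {x : B.T} (hx : x ∈ B.gr p q) :
    x = 0 ∨ ∃ (n : ℕ) (y : Y n), q = n ∧ x = ι p n y := by
  rcases lt_or_ge q 0 with hq | hq
  · rw [h.gr_of_neg p hq] at hx
    exact .inl hx
  · lift q to ℕ using hq
    rw [h.gr_natCast] at hx
    obtain ⟨y, rfl⟩ := hx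
    exact .inr ⟨q, y, rfl, rfl⟩

theorem apply_mem_gr (h : E.IsPresentation P B ι) (p : ℤ) {q : ℕ} (y : Y q) :
    ι p q y ∈ B.gr p q :=
  h.gr_natCast p q ▸ LinearMap.mem_range_self _ y

theorem isBigraded (h : E.IsPresentation P B ι) : B.IsBigraded where
  rel_eq_bot := h.rel_eq_bot
  independent := h.independent
  dh_mem hx := by
    obtain rfl | ⟨n, y, rfl, rfl⟩ := h.exists_of_mem_gr hx
    · rw [map_zero]; exact zero_mem _
    · rw [h.dh_apply]; exact h.apply_mem_gr _ _
  dv_mem hx := by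
    obtain rfl | ⟨_ | n, y, rfl, rfl⟩ := h.exists_of_mem_gr hx
    · rw [map_zero]; exact zero_mem _
    · rw [h.dv_zero]; exact zero_mem _
    · rw [h.dv_succ, Nat.cast_succ, add_sub_cancel_right]; exact h.apply_mem_gr _ _

theorem dv_apply_eq_zero_iff (h : E.IsPresentation P B ι) {p : ℤ} (hp : p ∈ P) :
    ∀ {q : ℕ} {y : Y q}, B.dv (ι p q y) = 0 ↔ y ∈ cycles (E.vert p) q
  | 0, y => by simp only [h.dv_zero, cycles, Submodule.mem_top]
  | q + 1, y => by
    rw [h.dv_succ, map_eq_zero_iff _ (h.injective hp q)]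
    rfl

theorem isZigzag_apply (h : E.IsPresentation P B ι) {p : ℤ} {q R : ℕ} {y : ∀ i, Y (q + i)}
    (hy : E.IsZigzag p q R y) : B.IsZigzag p q R fun i => ι (p - i) (q + i) (y i) where
  mem i := by simpa only [Nat.cast_add] using h.apply_mem_gr (p - i) (y i)
  step i hi := by
    have hp : p - i - 1 = p - (i + 1 : ℕ) := by push_cast; ring
    have hdv : B.dv (ι (p - (i + 1 : ℕ)) (q + (i + 1)) (y (i + 1))) = _ := h.dv_succ _ (q + i) _
    rw [h.dh_apply, hdv, hp, ← map_add, hy i hi, map_zero]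

theorem collapsesAt_one (h : E.IsPresentation P B ι)
    (H : ∀ p ∈ P, ∀ q, ∀ y ∈ cycles (E.vert p) q, ∀ R, ∃ z, z 0 = y ∧ E.IsZigzag p q R z) :
    B.collapsesAt B.Fcol 1 := by
  refine h.isBigraded.collapsesAt_one_iff_exists_isZigzag.2 fun p q x hx h0 R => ?_
  have hzero : B.IsZigzag p q R 0 := ⟨fun _ => zero_mem _, fun i _ => by simp⟩
  obtain rfl | ⟨n, y, rfl, rfl⟩ := h.exists_of_mem_gr hx
  · exact ⟨0, rfl, hzero⟩
  by_cases hp : p ∈ P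
  · obtain ⟨z, rfl, hz⟩ := H p hp n y ((h.dv_apply_eq_zero_iff hp).1 h0) R
    exact ⟨_, by simp, h.isZigzag_apply hz⟩
  · exact ⟨0, by rw [h.eq_zero hp]; rfl, hzero⟩

theorem exists_isZigzag (h : E.IsPresentation P B ι) (hc : B.collapsesAt B.Fcol 1) {p : ℤ}
    {q R : ℕ} (hP : ∀ i ≤ R, p - i ∈ P) {y : Y q} (hy : y ∈ cycles (E.vert p) q) :
    ∃ z, z 0 = y ∧ E.IsZigzag p q R z := by
  have hp : p ∈ P := by simpa using hP 0 (Nat.zero_le R)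
  obtain ⟨x, hx0, hx⟩ := h.isBigraded.collapsesAt_one_iff_exists_isZigzag.1 hc p q _
    (h.apply_mem_gr p y) ((h.dv_apply_eq_zero_iff hp).2 hy) R
  have hcomp (i : ℕ) : ∃ z : Y (q + i), ι (p - i) (q + i) z = x i := by
    simpa only [← Nat.cast_add, h.gr_natCast, LinearMap.mem_range] using hx.mem i
  choose z hz using hcomp
  refine ⟨z, h.injective hp q ?_, fun i hi => ?_⟩
  · have h0 : ι (p - (0 : ℕ)) q (z 0) = x 0 := hz 0
    rwa [Nat.cast_zero, sub_zero, hx0] at h0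
  · have hstep := hx.step i hi
    have hp : p - i - 1 = p - (i + 1 : ℕ) := by push_cast; ring
    have hdv : B.dv (x (i + 1)) = _ :=
      (congrArg B.dv (hz (i + 1))).symm.trans (h.dv_succ _ (q + i) _)
    rw [← hz i, h.dh_apply, hdv, hp, ← map_add] at hstep
    exact (map_eq_zero_iff _ (h.injective (hP (i + 1) hi) _)).1 hstep

end IsPresentation

section ColumnIncl

variable {J : Type} [DecidableEq J] (P : Set ℤ) (a : ℤ → J)

variable (k Y) in
open scoped Classical in
/-- The inclusion of `Y q` as the term of bidegree `(p, q)` when `p ∈ P`, where column `p` is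
labelled by `a p`, and zero when `p ∉ P`. -/
def columnIncl (p : ℤ) (q : ℕ) : Y q →ₗ[k] Π₀ j : J × ℕ, Y j.2 :=
  if p ∈ P then DFinsupp.lsingle (M := fun j : J × ℕ => Y j.2) (a p, q) else 0

variable {P a}

theorem columnIncl_apply {p : ℤ} (hp : p ∈ P) (q : ℕ) (y : Y q) :
    columnIncl k Y P a p q y = DFinsupp.single (a p, q) y := by
  rw [columnIncl, if_pos hp]; rfl

theorem columnIncl_eq_zero {p : ℤ} (hp : p ∉ P) (q : ℕ) : columnIncl k Y P a p q = 0 :=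
  if_neg hp

theorem iSupIndep_of_eq_single (ha : Set.InjOn a P)
    {gr : ℤ → ℤ → Submodule k (Π₀ j : J × ℕ, Y j.2)}
    (h : ∀ {p q x}, x ∈ gr p q →
      x = 0 ∨ p ∈ P ∧ ∃ (n : ℕ) (y : Y n), q = n ∧ x = DFinsupp.single (a p, n) y) :
    iSupIndep fun pq : ℤ × ℤ => gr pq.1 pq.2 := by
  refine iSupIndep_of_apply_eq_zero_or ?_
  rintro ⟨p, q⟩ ⟨p', q'⟩ hne x hx x' hx' i
  obtain rfl | ⟨hp, n, y, rfl, rfl⟩ := h hx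
  · exact .inl rfl
  obtain rfl | ⟨hp', n', y', rfl, rfl⟩ := h hx'
  · exact .inr rfl
  by_cases hi : i = (a p, n)
  · refine .inr (DFinsupp.single_eq_of_ne fun hi' => hne ?_)
    obtain ⟨hap, rfl⟩ := Prod.mk.inj (hi.symm.trans hi')
    exact congrArg (·, (n : ℤ)) (ha hp hp' hap)
  · exact .inl (DFinsupp.single_eq_of_ne hi)

variable {E}

theorem isPresentation_columnIncl (hP : ∀ p, p - 1 ∈ P → p ∈ P) (ha : Set.InjOn a P)
    {gr : ℤ → ℤ → Submodule k (Π₀ j : J × ℕ, Y j.2)}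
    {dv dh : (Π₀ j : J × ℕ, Y j.2) →ₗ[k] Π₀ j : J × ℕ, Y j.2}
    (hgr : ∀ p ∈ P, ∀ q : ℕ,
      gr p q = Submodule.map (DFinsupp.lsingle (M := fun j : J × ℕ => Y j.2) (a p, q)) ⊤)
    (hgr_bot : ∀ p q, p ∉ P ∨ q < 0 → gr p q = ⊥)
    (hdv_zero : ∀ p ∈ P, ∀ y : Y 0, dv (DFinsupp.single (a p, 0) y) = 0)
    (hdv_succ : ∀ p ∈ P, ∀ q, ∀ y : Y (q + 1),
      dv (DFinsupp.single (a p, q + 1) y) = DFinsupp.single (a p, q) (E.vert p q y))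
    (hdh : ∀ p ∈ P, p - 1 ∈ P → ∀ q, ∀ y : Y q,
      dh (DFinsupp.single (a p, q) y) = DFinsupp.single (a (p - 1), q) (E.horiz p q y))
    (hdh_zero : ∀ p ∈ P, p - 1 ∉ P → ∀ q, ∀ y : Y q, dh (DFinsupp.single (a p, q) y) = 0) :
    E.IsPresentation P { T := Π₀ j : J × ℕ, Y j.2, gr := gr, N := ⊥, dv := dv, dh := dh }
      (columnIncl k Y P a) where
  rel_eq_bot := rfl
  independent := by
    refine iSupIndep_of_eq_single ha (gr := gr) fun {p q x} hx => ?_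
    by_cases h : p ∉ P ∨ q < 0
    · rw [hgr_bot p q h] at hx
      exact .inl hx
    · push Not at h
      lift q to ℕ using h.2
      rw [hgr p h.1] at hx
      obtain ⟨y, -, rfl⟩ := hx
      exact .inr ⟨h.1, q, y, rfl, rfl⟩
  gr_natCast p q := by
    by_cases hp : p ∈ P
    · rw [columnIncl, if_pos hp, ← Submodule.map_top, ← hgr p hp]
    · rw [columnIncl_eq_zero hp, LinearMap.range_zero]
      exact hgr_bot p q (.inl hp)
  gr_of_neg p _ hq := hgr_bot p _ (.inr hq)
  dv_zero p y := by
    by_cases hp : p ∈ P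
    · rw [columnIncl_apply hp, hdv_zero p hp]
    · rw [columnIncl_eq_zero hp, LinearMap.zero_apply, map_zero]
  dv_succ p q y := by
    by_cases hp : p ∈ P
    · rw [columnIncl_apply hp, columnIncl_apply hp, hdv_succ p hp]
    · simp only [columnIncl_eq_zero hp, LinearMap.zero_apply, map_zero]
  dh_apply p q y := by
    by_cases hp : p ∈ P
    · by_cases hp' : p - 1 ∈ P
      · rw [columnIncl_apply hp, columnIncl_apply hp', hdh p hp hp']
      · rw [columnIncl_apply hp, columnIncl_eq_zero hp', hdh_zero p hp hp', LinearMap.zero_apply]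
    · rw [columnIncl_eq_zero hp, columnIncl_eq_zero fun h => hp (hP p h), LinearMap.zero_apply,
        LinearMap.zero_apply, map_zero]
  injective {p} hp q := by
    rw [columnIncl, if_pos hp]
    exact DFinsupp.single_injective (β := fun j : J × ℕ => Y j.2) (i := (a p, q))
  eq_zero := columnIncl_eq_zero

end ColumnIncl

end ColumnDifferentials

end Columns

namespace CycMod

open ColumnDifferentials

variable (C : CycMod)

/-- The differentials of `CC(𝓜)`. -/
def CCdiff : ColumnDifferentials (ZMod 2) C.X where
  vert p q := if Even p then C.bd q else C.bd' q
  horiz p q := if Even p then ∑ i ∈ Finset.range (q + 1), C.t q ^ i else LinearMap.id + C.t q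

/-- The differentials of `Π^{ℤ/2}` and `Π^{Tate}`. -/
def PiDiff : ColumnDifferentials (ZMod 2) C.PiX where
  vert _ := C.bdPi
  horiz _ q := LinearMap.id + C.tauPi q

theorem isPresentation_PiTate :
    C.PiDiff.IsPresentation Set.univ C.PiTate (columnIncl (ZMod 2) C.PiX Set.univ id) :=
  isPresentation_columnIncl (P := Set.univ) (fun _ _ => trivial) (Set.injOn_id _)
    (fun _ _ q => if_pos (Int.natCast_nonneg q))
    (fun _ _ h => if_neg (not_le.2 (h.resolve_left fun h => h trivial)))
    (fun _ _ _ => DFinsupp.lsum_single ..) (fun _ _ _ _ => DFinsupp.lsum_single ..)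
    (fun _ _ _ _ _ => DFinsupp.lsum_single ..) (fun _ _ h => absurd trivial h)

theorem isPresentation_PiZhalf :
    C.PiDiff.IsPresentation (Set.Ici 0) C.PiZhalf
      (columnIncl (ZMod 2) C.PiX (Set.Ici 0) id) := by
  refine isPresentation_columnIncl (P := Set.Ici 0) (fun p hp => (sub_one_lt p).le.trans' hp)
    (Set.injOn_id _) (fun _ hp q => if_pos ⟨hp, Int.natCast_nonneg q⟩)
    (fun _ _ h => if_neg fun h' => h.elim (· h'.1) h'.2.not_gt)
    (fun _ _ _ => DFinsupp.lsum_single ..) (fun _ _ _ _ => DFinsupp.lsum_single ..)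
    (fun p _ hp q y => (DFinsupp.lsum_single ..).trans (LinearMap.congr_fun (if_neg ?_) y))
    (fun p _ hp q y => (DFinsupp.lsum_single ..).trans (LinearMap.congr_fun (if_pos ?_) y))
  all_goals
    simp only [Set.mem_Ici, id] at hp ⊢
    omega

theorem isPresentation_CC :
    C.CCdiff.IsPresentation (Set.Ici 0) C.CC (columnIncl (ZMod 2) C.X (Set.Ici 0) Int.toNat) := by
  refine isPresentation_columnIncl (P := Set.Ici 0) (fun p hp => (sub_one_lt p).le.trans' hp)
    (fun p hp p' hp' h => ?_) (fun _ hp q => if_pos ⟨hp, Int.natCast_nonneg q⟩)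
    (fun _ _ h => if_neg fun h' => h.elim (· h'.1) h'.2.not_gt)
    (fun _ _ _ => DFinsupp.lsum_single ..)
    (fun p hp q y => (DFinsupp.lsum_single ..).trans ?_)
    (fun p hp hp' q y => (DFinsupp.lsum_single ..).trans ?_)
    (fun p hp hp' q y => (DFinsupp.lsum_single ..).trans ?_)
  · rwa [← Int.toNat_of_nonneg hp, ← Int.toNat_of_nonneg hp', Nat.cast_inj]
  · lift p to ℕ using hp
    simp only [CCdiff, Int.even_coe_nat]
    rfl
  · obtain ⟨p, rfl⟩ : ∃ m : ℕ, p = (m + 1 : ℕ) :=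
      ⟨(p - 1).toNat, by rw [Set.mem_Ici] at hp'; omega⟩
    simp only [CCdiff, Int.even_coe_nat, Nat.even_add_one, ite_not]
    generalize hm : (((p + 1 : ℕ) : ℤ) - 1).toNat = m
    obtain rfl : m = p := by omega
    rfl
  · obtain rfl : p = 0 := by rw [Set.mem_Ici] at hp hp'; omega
    rfl

end CycMod

/-! ### Extra degeneracy and partial face sums of a cyclic module -/

namespace CycMod

variable (C : CycMod) {n : ℕ}

section CyclicIdentities

variable {C}

theorem d_succ_t {i : ℕ} (hi : i ≤ n) (x : C.X (n + 1)) :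
    C.d n (i + 1) (C.t (n + 1) x) = C.t n (C.d n i x) :=
  LinearMap.congr_fun (C.dt n (i + 1) (by omega) (by omega)) x

theorem d_zero_t (x : C.X (n + 1)) : C.d n 0 (C.t (n + 1) x) = C.d n (n + 1) x :=
  LinearMap.congr_fun (C.d0t n) x

theorem d_d {i j : ℕ} (hij : i ≤ j) (hj : j ≤ n + 1) (x : C.X (n + 2)) :
    C.d n i (C.d (n + 1) (j + 1) x) = C.d n j (C.d (n + 1) i x) :=
  LinearMap.congr_fun (C.dd n i (j + 1) (by omega) (by omega)) x

theorem d_s_self {j : ℕ} (hj : j ≤ n) (x : C.X n) : C.d n j (C.s n j x) = x :=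
  LinearMap.congr_fun (C.ds_eq n j hj).1 x

theorem d_succ_s_self {j : ℕ} (hj : j ≤ n) (x : C.X n) : C.d n (j + 1) (C.s n j x) = x :=
  LinearMap.congr_fun (C.ds_eq n j hj).2 x

theorem d_s_succ {i j : ℕ} (hij : i ≤ j) (hj : j ≤ n) (x : C.X (n + 1)) :
    C.d (n + 1) i (C.s (n + 1) (j + 1) x) = C.s n j (C.d n i x) :=
  LinearMap.congr_fun (C.ds_lt n i (j + 1) (by omega) (by omega)) x

theorem d_succ_s {i j : ℕ} (hij : j < i) (hi : i ≤ n + 1) (x : C.X (n + 1)) :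
    C.d (n + 1) (i + 1) (C.s (n + 1) j x) = C.s n j (C.d n i x) :=
  LinearMap.congr_fun (C.ds_gt n (i + 1) j (by omega) (by omega)) x

theorem s_s {i j : ℕ} (hij : i ≤ j) (hj : j ≤ n) (x : C.X n) :
    C.s (n + 1) i (C.s n j x) = C.s (n + 1) (j + 1) (C.s n i x) :=
  LinearMap.congr_fun (C.ss n i j hij hj) x

theorem s_succ_t {i : ℕ} (hi : i < n) (x : C.X n) :
    C.s n (i + 1) (C.t n x) = C.t (n + 1) (C.s n i x) :=
  LinearMap.congr_fun (C.st n (i + 1) (by omega) (by omega)) x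

theorem s_zero_t (x : C.X n) : C.s n 0 (C.t n x) = C.t (n + 1) (C.t (n + 1) (C.s n n x)) :=
  LinearMap.congr_fun (C.s0t n) x

theorem t_pow_card (x : C.X n) : (C.t n ^ (n + 1)) x = x :=
  LinearMap.congr_fun (C.t_ord n) x

theorem t_pow_succ (k : ℕ) (x : C.X n) : (C.t n ^ (k + 1)) x = C.t n ((C.t n ^ k) x) :=
  LinearMap.congr_fun (pow_succ' (C.t n) k) x

theorem t_pow_add (k l : ℕ) (x : C.X n) : (C.t n ^ (k + l)) x = (C.t n ^ k) ((C.t n ^ l) x) :=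
  LinearMap.congr_fun (pow_add (C.t n) k l) x

theorem d_t_pow_of_ge {j : ℕ} (k : ℕ) (hj : j + k ≤ n + 1) (x : C.X (n + 1)) :
    C.d n (j + k) ((C.t (n + 1) ^ k) x) = (C.t n ^ k) (C.d n j x) := by
  induction k with
  | zero => rfl
  | succ k ih => rw [t_pow_succ, ← add_assoc, d_succ_t (by omega), ih (by omega), t_pow_succ]

theorem d_t_pow_of_lt {j k l : ℕ} (hj : j ≤ k) (hl : l + k = n + 1 + j) (hk : k ≤ n + 1)
    (x : C.X (n + 1)) :
    C.d n j ((C.t (n + 1) ^ (k + 1)) x) = (C.t n ^ k) (C.d n l x) := by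
  obtain ⟨m, rfl⟩ := Nat.exists_eq_add_of_le hj
  have h := d_t_pow_of_ge (j := 0) j (by omega) ((C.t (n + 1) ^ (m + 1)) x)
  rw [zero_add, t_pow_succ m, d_zero_t, ← t_pow_succ, ← t_pow_add] at h
  rw [add_assoc, h, t_pow_add, ← d_t_pow_of_ge (j := l) m (by omega),
    show l + m = n + 1 by omega]

theorem t_pow_s {i p : ℕ} (h : i + p ≤ n) (x : C.X n) :
    (C.t (n + 1) ^ p) (C.s n i x) = C.s n (i + p) ((C.t n ^ p) x) := by
  induction p with
  | zero => rfl
  | succ p ih => rw [t_pow_succ, ih (by omega), t_pow_succ, ← add_assoc, s_succ_t (by omega)]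

end CyclicIdentities

/-- The extra degeneracy `s = t s_n`. -/
def extraDegen (n : ℕ) : C.X n →ₗ[ZMod 2] C.X (n + 1) := C.t (n + 1) ∘ₗ C.s n n

section ExtraDegeneracy

variable {C}

theorem d_zero_extraDegen (x : C.X n) : C.d n 0 (C.extraDegen n x) = x :=
  (d_zero_t _).trans (d_succ_s_self le_rfl x)

theorem d_succ_extraDegen {i : ℕ} (hi : i ≤ n) (x : C.X (n + 1)) :
    C.d (n + 1) (i + 1) (C.extraDegen (n + 1) x) = C.extraDegen n (C.d n i x) :=
  (d_succ_t (by omega) _).trans (congrArg _ (d_s_succ hi le_rfl x))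

theorem d_last_extraDegen (x : C.X n) : C.d n (n + 1) (C.extraDegen n x) = C.t n x :=
  (d_succ_t le_rfl _).trans (congrArg _ (d_s_self le_rfl x))

theorem s_succ_extraDegen {i : ℕ} (hi : i ≤ n) (x : C.X n) :
    C.s (n + 1) (i + 1) (C.extraDegen n x) = C.extraDegen (n + 1) (C.s n i x) := by
  simp only [extraDegen, LinearMap.comp_apply]
  rw [s_succ_t (by omega), s_s hi le_rfl]

theorem s_zero_extraDegen (x : C.X n) :
    C.s (n + 1) 0 (C.extraDegen n x) = C.extraDegen (n + 1) (C.extraDegen n x) := by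
  simp only [extraDegen, LinearMap.comp_apply]
  rw [s_zero_t, ← s_s le_rfl le_rfl, s_succ_t (Nat.lt_succ_self n)]

theorem t_pow_succ_extraDegen {p : ℕ} (hp : p ≤ n) (x : C.X n) :
    (C.t (n + 1) ^ (p + 1)) (C.extraDegen n x) = C.s n p ((C.t n ^ (p + 1)) x) := by
  rw [t_pow_add p 1, pow_one, t_pow_add p 1 x, pow_one, extraDegen, LinearMap.comp_apply,
    ← s_zero_t, t_pow_s (by omega), zero_add]

theorem t_pow_succ_s {p q : ℕ} (h : p + q = n) (x : C.X n) :
    (C.t (n + 1) ^ (p + 1)) (C.s n q x) = C.extraDegen n ((C.t n ^ p) x) := by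
  rw [t_pow_succ, t_pow_s (by omega), show q + p = n by omega]
  rfl

theorem extraDegen_t_pow_extraDegen {p : ℕ} (hp : p ≤ n + 1) (x : C.X n) :
    C.extraDegen (n + 1) ((C.t (n + 1) ^ p) (C.extraDegen n x)) =
      C.s (n + 1) p (C.extraDegen n ((C.t n ^ p) x)) := by
  cases p with
  | zero => exact (s_zero_extraDegen x).symm
  | succ p => rw [t_pow_succ_extraDegen (by omega), s_succ_extraDegen (by omega)]

end ExtraDegeneracy

/-- The sum `d_a + ⋯ + d_{b-1}` of consecutive faces. -/
def faceSum (n a b : ℕ) : C.X (n + 1) →ₗ[ZMod 2] C.X n := ∑ j ∈ Finset.Ico a b, C.d n j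

section FaceSums

variable {C}

theorem bd_apply (x : C.X (n + 1)) : C.bd n x = C.faceSum n 0 (n + 2) x := by
  rw [bd, faceSum, Finset.range_eq_Ico]

theorem bd'_apply (x : C.X (n + 1)) : C.bd' n x = C.faceSum n 0 (n + 1) x := by
  rw [bd', faceSum, Finset.range_eq_Ico]

theorem faceSum_self (a : ℕ) (x : C.X (n + 1)) : C.faceSum n a a x = 0 := by
  rw [faceSum, Finset.Ico_self, Finset.sum_empty, LinearMap.zero_apply]

theorem faceSum_add_faceSum {a b c : ℕ} (hab : a ≤ b) (hbc : b ≤ c) (x : C.X (n + 1)) :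
    C.faceSum n a b x + C.faceSum n b c x = C.faceSum n a c x := by
  rw [← LinearMap.add_apply, faceSum, faceSum, Finset.sum_Ico_consecutive _ hab hbc, faceSum]

theorem faceSum_succ {a b : ℕ} (hab : a ≤ b) (x : C.X (n + 1)) :
    C.faceSum n a (b + 1) x = C.faceSum n a b x + C.d n b x := by
  rw [faceSum, Finset.sum_Ico_succ_top hab, LinearMap.add_apply, faceSum]

theorem faceSum_eq_add {a b : ℕ} (hab : a < b) (x : C.X (n + 1)) :
    C.faceSum n a b x = C.d n a x + C.faceSum n (a + 1) b x := by
  rw [faceSum, Finset.sum_eq_sum_Ico_succ_bot hab, LinearMap.add_apply, faceSum]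

theorem faceSum_apply_eq_map {m a b c e : ℕ} {y : C.X (m + 1)} {x : C.X (n + 1)}
    (g : C.X n →ₗ[ZMod 2] C.X m)
    (h : ∀ j, a ≤ j → j < b → C.d m (j + c) y = g (C.d n (j + e) x)) :
    C.faceSum m (a + c) (b + c) y = g (C.faceSum n (a + e) (b + e) x) := by
  simp only [faceSum, LinearMap.sum_apply, map_sum]
  rw [← Finset.sum_Ico_add' (fun j => C.d m j y), ← Finset.sum_Ico_add' fun j => g (C.d n j x)]
  exact Finset.sum_congr rfl fun j hj => h j (Finset.mem_Ico.1 hj).1 (Finset.mem_Ico.1 hj).2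

theorem t_pow_faceSum_of_le {a b k : ℕ} (hb : b + k ≤ n + 2) (x : C.X (n + 1)) :
    (C.t n ^ k) (C.faceSum n a b x) = C.faceSum n (a + k) (b + k) ((C.t (n + 1) ^ k) x) :=
  (faceSum_apply_eq_map (e := 0) _ fun _ _ _ => d_t_pow_of_ge k (by omega) x).symm

theorem t_pow_faceSum_of_ge {a k : ℕ} (hk : a + k = n + 1) (x : C.X (n + 1)) :
    (C.t n ^ k) (C.faceSum n a (n + 2) x) = C.faceSum n 0 (k + 1) ((C.t (n + 1) ^ (k + 1)) x) := by
  have h := faceSum_apply_eq_map (c := 0) (e := a) (a := 0) (b := k + 1) (C.t n ^ k)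
    fun j _ hj => d_t_pow_of_lt (l := j + a) (by omega : j ≤ k) (by omega) (by omega) x
  rw [h, zero_add, show k + 1 + a = n + 2 by omega]

theorem faceSum_succ_s {p : ℕ} (hp : p ≤ n) (x : C.X (n + 1)) :
    C.faceSum (n + 1) (p + 1) (n + 3) (C.s (n + 1) p x) =
      x + C.s n p (C.faceSum n (p + 1) (n + 2) x) := by
  rw [faceSum_eq_add (by omega), d_succ_s_self (by omega)]
  exact congrArg _ (faceSum_apply_eq_map (c := 1) (e := 0) _ fun j hj hj' =>
    d_succ_s (by omega) (by omega) x)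

theorem faceSum_zero_s_succ {p : ℕ} (hp : p ≤ n) (x : C.X (n + 1)) :
    C.faceSum (n + 1) 0 (p + 2) (C.s (n + 1) (p + 1) x) =
      x + C.s n p (C.faceSum n 0 (p + 1) x) := by
  rw [faceSum_succ (by omega), d_s_self (by omega), add_comm x]
  exact congrArg (· + x) (faceSum_apply_eq_map (c := 0) (e := 0) _ fun j _ hj =>
    d_s_succ (by omega) hp x)

theorem faceSum_succ_extraDegen {a b : ℕ} (hb : b ≤ n + 1) (x : C.X (n + 1)) :
    C.faceSum (n + 1) (a + 1) (b + 1) (C.extraDegen (n + 1) x) =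
      C.extraDegen n (C.faceSum n a b x) :=
  faceSum_apply_eq_map (c := 1) (e := 0) _ fun _ _ _ => d_succ_extraDegen (by omega) x

theorem bd_extraDegen (x : C.X (n + 1)) :
    C.bd (n + 1) (C.extraDegen (n + 1) x) =
      x + C.t (n + 1) x + C.extraDegen n (C.bd' n x) := by
  rw [bd_apply, faceSum_succ (by omega), faceSum_eq_add (by omega), d_zero_extraDegen,
    d_last_extraDegen, faceSum_succ_extraDegen le_rfl, bd'_apply, add_right_comm]

theorem t_pow_bd {k : ℕ} (hk : k ≤ n) (x : C.X (n + 1)) :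
    (C.t n ^ k) (C.bd n x) =
      C.faceSum n k (n + 1) ((C.t (n + 1) ^ k) x) +
        C.faceSum n 0 (k + 1) ((C.t (n + 1) ^ (k + 1)) x) := by
  obtain ⟨m, rfl⟩ := Nat.exists_eq_add_of_le hk
  rw [bd_apply, ← faceSum_add_faceSum (Nat.zero_le (m + 1)) (by omega), map_add,
    t_pow_faceSum_of_le (by omega), t_pow_faceSum_of_ge (by omega), zero_add,
    show m + 1 + k = k + m + 1 by omega]

end FaceSums

end CycMod

/-! ### The complex `Π(𝓜)` -/

namespace CycMod

variable {C : CycMod} {n : ℕ}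

section PiComplex

theorem tauPi_apply (z : C.PiX n) (p : Fin (n + 1)) :
    C.tauPi n z p = (C.t (n + 1) ^ ((p : ℕ) + 1)) (z p.rev) := rfl

theorem bdPi_apply (z : C.PiX (n + 1)) (p : Fin (n + 1)) :
    C.bdPi n z p =
      C.faceSum (n + 1) (p + 1) (n + 3) (z p.castSucc) +
        C.faceSum (n + 1) 0 (p + 2) (z p.succ) := by
  have hIcc : Finset.Icc ((p : ℕ) + 1) (n + 2) = Finset.Ico ((p : ℕ) + 1) (n + 3) := by
    ext; simp only [Finset.mem_Icc, Finset.mem_Ico]; omega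
  rw [faceSum, faceSum, ← hIcc, ← Finset.range_eq_Ico]
  rfl

theorem tauPi_tauPi (z : C.PiX n) : C.tauPi n (C.tauPi n z) = z := by
  funext p
  rw [tauPi_apply, tauPi_apply, Fin.rev_rev, ← t_pow_add, Fin.val_rev,
    show (p : ℕ) + 1 + (n + 1 - (p + 1) + 1) = n + 1 + 1 by omega, t_pow_card]

theorem bdPi_tauPi (z : C.PiX (n + 1)) :
    C.bdPi n (C.tauPi (n + 1) z) = C.tauPi n (C.bdPi n z) := by
  funext p
  have hp := p.isLt
  rw [tauPi_apply, bdPi_apply, bdPi_apply, tauPi_apply, tauPi_apply, map_add,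
    t_pow_faceSum_of_ge (by rw [Fin.val_rev]; omega),
    t_pow_faceSum_of_le (by rw [Fin.val_rev]; omega), Fin.rev_castSucc, Fin.rev_succ,
    Fin.val_castSucc, Fin.val_succ, zero_add, Fin.val_rev,
    show n + 1 - (p + 1) + 2 + (p + 1) = n + 3 by omega]
  exact add_comm _ _

theorem bdPi_apply_of_degenerate {z : C.PiX (n + 1)} {g : ℕ → C.X (n + 1)}
    (hz : ∀ p, z p = C.s (n + 1) p (g p)) (p : Fin (n + 1)) :
    C.bdPi n z p = g p + g (p + 1) +
      C.s n p (C.faceSum n (p + 1) (n + 2) (g p) + C.faceSum n 0 (p + 1) (g (p + 1))) := by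
  have hp : (p : ℕ) ≤ n := by omega
  rw [bdPi_apply, hz, hz, Fin.val_castSucc, Fin.val_succ, faceSum_succ_s hp,
    faceSum_zero_s_succ hp, add_add_add_comm, map_add]

theorem tauPi_apply_of_degenerate {z : C.PiX n} {g : ℕ → C.X n}
    (hz : ∀ p, z p = C.s n p (g p)) (p : Fin (n + 1)) :
    C.tauPi n z p = C.extraDegen n ((C.t n ^ (p : ℕ)) (g (n - p))) := by
  have hp : (p.rev : ℕ) = n - p := by rw [Fin.val_rev]; omega
  rw [tauPi_apply, hz, hp, t_pow_succ_s (by omega)]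

end PiComplex

section Sigma

variable (C n) in
/-- The chain map `σ = (s_0, …, s_n)` from `HC(𝓜)` to `Π(𝓜)`. -/
def sigma : C.X n →ₗ[ZMod 2] C.PiX n := LinearMap.pi fun p => C.s n p

theorem bdPi_sigma (x : C.X (n + 1)) : C.bdPi n (C.sigma (n + 1) x) = C.sigma n (C.bd n x) := by
  funext p
  rw [bdPi_apply_of_degenerate (z := C.sigma (n + 1) x) (g := fun _ => x) (fun _ => rfl),
    ZModModule.add_self, zero_add, add_comm (C.faceSum n (p + 1) (n + 2) x),
    faceSum_add_faceSum (by omega) (by omega), ← bd_apply]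
  rfl

theorem tauPi_sigma_apply (x : C.X n) (p : Fin (n + 1)) :
    C.tauPi n (C.sigma n x) p = C.extraDegen n ((C.t n ^ (p : ℕ)) x) :=
  tauPi_apply_of_degenerate (g := fun _ => x) (fun _ => rfl) p

variable (C) in
/-- The final part `t^p + ⋯ + t^n` of the norm `N = 1 + t + ⋯ + t^n`. -/
def partialNorm (n p : ℕ) : C.X n →ₗ[ZMod 2] C.X n := ∑ k ∈ Finset.Ico p (n + 1), C.t n ^ k

theorem partialNorm_eq_zero {p : ℕ} (hp : n < p) (x : C.X n) : C.partialNorm n p x = 0 := by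
  rw [partialNorm, Finset.Ico_eq_empty (by omega), Finset.sum_empty, LinearMap.zero_apply]

theorem partialNorm_eq_add {p : ℕ} (hp : p ≤ n) (x : C.X n) :
    C.partialNorm n p x = (C.t n ^ p) x + C.partialNorm n (p + 1) x := by
  rw [partialNorm, Finset.sum_eq_sum_Ico_succ_bot (by omega), LinearMap.add_apply, partialNorm]

theorem t_pow_partialNorm {p l : ℕ} (h : p + l = n + 1) (x : C.X n) :
    (C.t n ^ p) (C.partialNorm n l x) = (∑ k ∈ Finset.range p, C.t n ^ k) x := by
  have hpow (k : ℕ) : (C.t n ^ p) ((C.t n ^ (k + l)) x) = (C.t n ^ k) x := by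
    rw [← t_pow_add, show p + (k + l) = k + (n + 1) by omega, t_pow_add, t_pow_card]
  have hsum := Finset.sum_Ico_add' (fun k => (C.t n ^ p) ((C.t n ^ k) x)) 0 p l
  simp only [hpow, zero_add, h, ← Finset.range_eq_Ico] at hsum
  simp only [partialNorm, LinearMap.sum_apply, map_sum, hsum]

theorem t_partialNorm {p : ℕ} (hp : p ≤ n) (x : C.X n) :
    C.t n (C.partialNorm n p x) = C.partialNorm n (p + 1) x + x := by
  simp only [partialNorm, LinearMap.sum_apply, map_sum, ← t_pow_succ]
  rw [Finset.sum_Ico_add' (fun k => (C.t n ^ k) x), Finset.sum_Ico_succ_top (by omega), t_pow_card]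

theorem partialNorm_t (p : ℕ) (x : C.X n) :
    C.partialNorm n p (C.t n x) = C.t n (C.partialNorm n p x) := by
  have h : Commute (C.partialNorm n p) (C.t n) :=
    Commute.sum_left _ _ _ fun k _ => Commute.pow_left (Commute.refl _) k
  exact LinearMap.congr_fun h.eq x

theorem partialNorm_bd {p : ℕ} (hp : p ≤ n + 1) (x : C.X (n + 1)) :
    C.partialNorm n p (C.bd n x) =
      C.faceSum n p (n + 1) (C.partialNorm (n + 1) p x) +
        C.faceSum n 0 p (C.partialNorm (n + 1) (p + 1) x) := by
  induction hp using Nat.decreasingInduction with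
  | self =>
    rw [partialNorm_eq_zero n.lt_succ_self, partialNorm_eq_zero (n + 1).lt_succ_self, faceSum_self,
      map_zero, add_zero]
  | of_succ p hp ih =>
    rw [partialNorm_eq_add (by omega), ih, t_pow_bd (by omega),
      partialNorm_eq_add (p := p) (by omega), partialNorm_eq_add (p := p + 1) (by omega),
      faceSum_succ (b := p) (by omega), faceSum_succ (b := p) (by omega),
      faceSum_eq_add (a := p) (b := n + 1) (by omega),
      faceSum_eq_add (a := p) (b := n + 1) (by omega)]
    simp only [map_add]
    abel

variable (C n) in
/-- The homotopy `(s_p s N_p)_p` from `σ` to `τ σ`, where `N_p = t^p + ⋯ + t^n`. -/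
def sigmaHomotopy : C.X n →ₗ[ZMod 2] C.PiX (n + 1) :=
  LinearMap.pi fun p => C.s (n + 1) p ∘ₗ C.extraDegen n ∘ₗ C.partialNorm n p

theorem bdPi_sigmaHomotopy_apply (x : C.X n) (p : Fin (n + 1)) :
    C.bdPi n (C.sigmaHomotopy n x) p =
      C.s n p x + C.extraDegen n ((C.t n ^ (p : ℕ)) x) +
        C.s n p (C.faceSum n (p + 1) (n + 1) (C.extraDegen n (C.partialNorm n p x)) +
          C.faceSum n 1 (p + 1) (C.extraDegen n (C.partialNorm n (p + 1) x))) := by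
  have hp : (p : ℕ) ≤ n := by omega
  rw [bdPi_apply_of_degenerate (z := C.sigmaHomotopy n x)
    (g := fun p => C.extraDegen n (C.partialNorm n p x)) (fun _ => rfl),
    faceSum_succ (b := n + 1) (by omega), d_last_extraDegen, t_partialNorm hp,
    faceSum_eq_add (a := 0) (by omega), d_zero_extraDegen, partialNorm_eq_add hp]
  generalize C.partialNorm n (p + 1) x = u
  simp only [map_add]
  linear_combination (norm := abel)
    ZModModule.add_self (C.extraDegen n u) + ZModModule.add_self (C.s n p u)

theorem bdPi_sigmaHomotopy (x : C.X (n + 1)) :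
    C.bdPi (n + 1) (C.sigmaHomotopy (n + 1) x) =
      C.sigma (n + 1) x + C.tauPi (n + 1) (C.sigma (n + 1) x) + C.sigmaHomotopy n (C.bd n x) := by
  funext p
  have hp : (p : ℕ) ≤ n + 1 := by omega
  have hlow (y : C.X (n + 1)) : C.faceSum (n + 1) 1 (p + 1) (C.extraDegen (n + 1) y) =
      C.extraDegen n (C.faceSum n 0 p y) := faceSum_succ_extraDegen (a := 0) hp y
  rw [bdPi_sigmaHomotopy_apply, faceSum_succ_extraDegen le_rfl, hlow, ← map_add,
    ← partialNorm_bd hp, Pi.add_apply, Pi.add_apply, tauPi_sigma_apply]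
  rfl

theorem bdPi_sigmaHomotopy_zero (x : C.X 0) :
    C.bdPi 0 (C.sigmaHomotopy 0 x) = C.sigma 0 x + C.tauPi 0 (C.sigma 0 x) := by
  funext p
  obtain rfl : p = 0 := Fin.eq_zero p
  rw [bdPi_sigmaHomotopy_apply, Pi.add_apply, tauPi_sigma_apply]
  simp only [Fin.val_zero, zero_add, faceSum_self, add_zero, map_zero]
  rfl

theorem tauPi_sigmaHomotopy_apply (x : C.X n) (p : Fin (n + 2)) :
    C.tauPi (n + 1) (C.sigmaHomotopy n x) p =
      C.s (n + 1) p (C.extraDegen n ((C.t n ^ (p : ℕ)) (C.partialNorm n (n + 1 - p) x))) := by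
  rw [tauPi_apply_of_degenerate (z := C.sigmaHomotopy n x)
    (g := fun p => C.extraDegen n (C.partialNorm n p x)) (fun _ => rfl),
    ← extraDegen_t_pow_extraDegen (by omega)]

theorem sigmaHomotopy_add_tauPi (x : C.X n) :
    C.sigmaHomotopy n x + C.tauPi (n + 1) (C.sigmaHomotopy n x) =
      C.sigma (n + 1) (C.extraDegen n ((∑ k ∈ Finset.range (n + 1), C.t n ^ k) x)) := by
  funext p
  have hp : (p : ℕ) ≤ n + 1 := by omega
  rw [Pi.add_apply, tauPi_sigmaHomotopy_apply, t_pow_partialNorm (by omega),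
    ← Finset.sum_range_add_sum_Ico _ hp, LinearMap.add_apply, map_add, map_add]
  exact add_comm _ _

theorem sigma_extraDegen_add_tauPi (x : C.X n) :
    C.sigma (n + 1) (C.extraDegen n x) + C.tauPi (n + 1) (C.sigma (n + 1) (C.extraDegen n x)) =
      C.sigmaHomotopy n (x + C.t n x) := by
  funext p
  have hp : (p : ℕ) ≤ n + 1 := by omega
  rw [Pi.add_apply, tauPi_sigma_apply, extraDegen_t_pow_extraDegen hp, map_add (C.sigmaHomotopy n),
    Pi.add_apply]
  simp only [sigma, sigmaHomotopy, LinearMap.pi_apply, LinearMap.comp_apply, ← map_add,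
    partialNorm_t]
  congr 2
  obtain hp | hp := hp.lt_or_eq
  · rw [t_partialNorm (by omega), partialNorm_eq_add (by omega)]
    generalize C.partialNorm n (p + 1) x = u
    linear_combination (norm := abel) -ZModModule.add_self u
  · rw [partialNorm_eq_zero (by omega), hp, t_pow_card, map_zero, add_zero, ZModModule.add_self]

end Sigma

section Contraction

variable (C n) in
/-- The augmentation `z ↦ d_{n+1} z_n` from `Π(𝓜)` to `HC(𝓜)`. Unlike `eps`, which uses `d_n`,
it commutes with the differentials. -/
def augmentation : C.PiX n →ₗ[ZMod 2] C.X n := C.d n (n + 1) ∘ₗ LinearMap.proj (Fin.last n)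

theorem augmentation_apply (z : C.PiX n) :
    C.augmentation n z = C.d n (n + 1) (z (Fin.last n)) := rfl

theorem bd_augmentation (z : C.PiX (n + 1)) :
    C.bd n (C.augmentation (n + 1) z) = C.augmentation n (C.bdPi n z) := by
  have hlow : C.faceSum n 0 (n + 2) (C.d (n + 1) (n + 2) (z (Fin.last (n + 1)))) =
      C.d n (n + 1) (C.faceSum (n + 1) 0 (n + 2) (z (Fin.last (n + 1)))) :=
    faceSum_apply_eq_map (c := 0) (e := 0) _ fun j _ hj => d_d (by omega) le_rfl _
  have hhigh (x : C.X (n + 2)) : C.d n (n + 1) (C.faceSum (n + 1) (n + 1) (n + 3) x) = 0 := by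
    rw [faceSum_succ (by omega), faceSum_succ le_rfl, faceSum_self, zero_add, map_add,
      d_d le_rfl le_rfl, ZModModule.add_self]
  rw [bd_apply, augmentation_apply, augmentation_apply, bdPi_apply, map_add, hlow, Fin.val_last,
    hhigh, zero_add, Fin.succ_last]

variable (C) in
/-- The tail `z_k + ⋯ + z_n` of the sum of the components of `z`. -/
def tailSum (n k : ℕ) : C.PiX n →ₗ[ZMod 2] C.X (n + 1) :=
  ∑ i ∈ Finset.univ.filter fun i : Fin (n + 1) => k ≤ i, LinearMap.proj i

theorem tailSum_eq_zero {k : ℕ} (hk : n < k) (z : C.PiX n) : C.tailSum n k z = 0 := by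
  rw [tailSum, Finset.filter_false_of_mem fun i _ => by omega, Finset.sum_empty,
    LinearMap.zero_apply]

theorem tailSum_eq_add (i : Fin (n + 1)) (z : C.PiX n) :
    C.tailSum n i z = z i + C.tailSum n (i + 1) z := by
  have hi : ({j : Fin (n + 1) | (i : ℕ) ≤ j} : Finset _) =
      insert i ({j : Fin (n + 1) | (i : ℕ) + 1 ≤ j} : Finset _) := by
    ext j
    simp only [Finset.mem_filter, Finset.mem_univ, true_and, Finset.mem_insert, Fin.ext_iff]
    omega
  rw [tailSum, hi, Finset.sum_insert (by simp), LinearMap.add_apply]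
  rfl

theorem faceSum_tailSum {k : ℕ} (hk : k ≤ n + 1) (z : C.PiX (n + 1)) :
    C.faceSum (n + 1) (k + 1) (n + 3) (C.tailSum (n + 1) k z) +
        C.faceSum (n + 1) 0 (k + 1) (C.tailSum (n + 1) (k + 1) z) =
      C.tailSum n k (C.bdPi n z) + C.augmentation (n + 1) z := by
  induction hk using Nat.decreasingInduction with
  | self =>
    have hlast : C.tailSum (n + 1) (n + 1) z = _ := tailSum_eq_add (Fin.last (n + 1)) z
    rw [tailSum_eq_zero n.lt_succ_self, hlast, Fin.val_last, tailSum_eq_zero (n + 1).lt_succ_self,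
      faceSum_succ le_rfl, faceSum_self, map_zero, add_zero, add_zero]
    rfl
  | of_succ k hk ih =>
    lift k to Fin (n + 1) using hk
    have h₀ : C.tailSum (n + 1) k z = _ := tailSum_eq_add k.castSucc z
    have h₁ : C.tailSum (n + 1) (k + 1) z = _ := tailSum_eq_add k.succ z
    rw [tailSum_eq_add k, add_assoc (C.bdPi n z k), ← ih, bdPi_apply, h₀, Fin.val_castSucc, map_add,
      faceSum_eq_add (a := k + 1) (x := C.tailSum (n + 1) (k + 1) z) (by omega),
      faceSum_succ (b := k + 1) (by omega), faceSum_succ (b := k + 1) (by omega), h₁, Fin.val_succ]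
    simp only [map_add]
    abel

variable (C n) in
/-- The homotopy `(s_p (z_p + ⋯ + z_n))_p` from `σ ∘ augmentation` to the identity of `Π(𝓜)`. -/
def contraction : C.PiX n →ₗ[ZMod 2] C.PiX (n + 1) :=
  LinearMap.pi fun p => C.s (n + 1) p ∘ₗ C.tailSum n p

theorem bdPi_contraction_apply (z : C.PiX n) (p : Fin (n + 1)) :
    C.bdPi n (C.contraction n z) p =
      z p + C.s n p (C.faceSum n (p + 1) (n + 2) (C.tailSum n p z) +
        C.faceSum n 0 (p + 1) (C.tailSum n (p + 1) z)) := by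
  rw [bdPi_apply_of_degenerate (z := C.contraction n z) (g := fun p => C.tailSum n p z)
    (fun _ => rfl), tailSum_eq_add p, add_assoc (z p), ZModModule.add_self, add_zero]

theorem bdPi_contraction (z : C.PiX (n + 1)) :
    C.bdPi (n + 1) (C.contraction (n + 1) z) =
      z + C.contraction n (C.bdPi n z) + C.sigma (n + 1) (C.augmentation (n + 1) z) := by
  funext p
  rw [bdPi_contraction_apply, faceSum_tailSum (by omega), map_add, ← add_assoc]
  rfl

theorem bdPi_contraction_zero (z : C.PiX 0) :
    C.bdPi 0 (C.contraction 0 z) = z + C.sigma 0 (C.augmentation 0 z) := by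
  funext p
  obtain rfl : p = 0 := Fin.eq_zero p
  have h₀ : C.tailSum 0 0 z = z 0 + C.tailSum 0 1 z := tailSum_eq_add 0 z
  have h₁ : C.tailSum 0 1 z = 0 := tailSum_eq_zero Nat.zero_lt_one z
  rw [bdPi_contraction_apply]
  simp only [Fin.val_zero, zero_add, h₀, h₁, map_zero, add_zero]
  rw [faceSum_succ le_rfl, faceSum_self]
  exact congrArg (z 0 + C.s 0 0 ·) (zero_add _)

theorem augmentation_mem_cycles :
    ∀ {n} {z : C.PiX n}, z ∈ cycles C.bdPi n → C.augmentation n z ∈ cycles C.bd n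
  | 0, _, _ => trivial
  | n + 1, z, hz => by
    have hz : C.bdPi n z = 0 := hz
    rw [cycles, LinearMap.mem_ker, bd_augmentation, hz, map_zero]

theorem exists_eq_sigma_add_bdPi :
    ∀ {n} {z : C.PiX n}, z ∈ cycles C.bdPi n →
      ∃ w, z = C.sigma n (C.augmentation n z) + C.bdPi n w
  | 0, z, _ => ⟨C.contraction 0 z, by
      rw [bdPi_contraction_zero, add_comm z, ← add_assoc, ZModModule.add_self, zero_add]⟩
  | n + 1, z, hz => ⟨C.contraction (n + 1) z, by
      have hz : C.bdPi n z = 0 := hz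
      rw [bdPi_contraction, hz, map_zero, add_zero, add_comm z, ← add_assoc, ZModModule.add_self,
        zero_add]⟩

end Contraction

end CycMod

/-! ### Zigzags in `Π` from zigzags in `CC(𝓜)` -/

namespace CycMod

variable {C : CycMod} {n : ℕ}

theorem CCdiff_vert_of_even {p : ℤ} (hp : Even p) (q : ℕ) : C.CCdiff.vert p q = C.bd q :=
  if_pos hp

theorem CCdiff_vert_of_odd {p : ℤ} (hp : ¬Even p) (q : ℕ) : C.CCdiff.vert p q = C.bd' q :=
  if_neg hp

theorem CCdiff_horiz_of_even {p : ℤ} (hp : Even p) (q : ℕ) :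
    C.CCdiff.horiz p q = ∑ k ∈ Finset.range (q + 1), C.t q ^ k :=
  if_pos hp

theorem CCdiff_horiz_of_odd {p : ℤ} (hp : ¬Even p) (q : ℕ) :
    C.CCdiff.horiz p q = LinearMap.id + C.t q :=
  if_neg hp

section Zigzag

variable {p : ℤ} {R : ℕ} {y : ∀ i, C.X (n + i)}

theorem norm_add_bd'_of_isZigzag (hp : Even p) (hy : C.CCdiff.IsZigzag p n R y) {i : ℕ}
    (hi : i < R) (he : Even i) :
    (∑ k ∈ Finset.range (n + i + 1), C.t (n + i) ^ k) (y i) + C.bd' (n + i) (y (i + 1)) = 0 := by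
  have h := hy i hi
  rwa [CCdiff_horiz_of_even (hp.sub ((Int.even_coe_nat i).2 he)), CCdiff_vert_of_odd] at h
  rwa [Int.even_sub, Int.even_coe_nat, Nat.even_add_one, iff_true_left hp, not_not]

theorem add_t_add_bd_of_isZigzag (hp : Even p) (hy : C.CCdiff.IsZigzag p n R y) {i : ℕ}
    (hi : i < R) (ho : ¬Even i) :
    y i + C.t (n + i) (y i) + C.bd (n + i) (y (i + 1)) = 0 := by
  have h := hy i hi
  rwa [CCdiff_horiz_of_odd, CCdiff_vert_of_even] at h
  · rwa [Int.even_sub, Int.even_coe_nat, Nat.even_add_one, iff_true_left hp]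
  · rwa [Int.even_sub, Int.even_coe_nat, iff_true_left hp]

end Zigzag

theorem sigma_add_tauPi_of_mem_cycles :
    ∀ {n} {x : C.X n}, x ∈ cycles C.bd n →
      C.sigma n x + C.tauPi n (C.sigma n x) = C.bdPi n (C.sigmaHomotopy n x)
  | 0, x, _ => (bdPi_sigmaHomotopy_zero x).symm
  | n + 1, x, hx => by
    have hx : C.bd n x = 0 := hx
    rw [bdPi_sigmaHomotopy, hx, map_zero, add_zero]

theorem sigmaHomotopy_add_tauPi_add_bdPi {x : C.X n} {y : C.X (n + 1)} {z : C.X (n + 2)}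
    (hN : (∑ k ∈ Finset.range (n + 1), C.t n ^ k) x + C.bd' n y = 0)
    (ht : y + C.t (n + 1) y + C.bd (n + 1) z = 0) :
    C.sigmaHomotopy n x + C.tauPi (n + 1) (C.sigmaHomotopy n x) +
      C.bdPi (n + 1) (C.sigma (n + 2) (z + C.extraDegen (n + 1) y)) = 0 := by
  have hz : C.bd (n + 1) (z + C.extraDegen (n + 1) y) = C.extraDegen n (C.bd' n y) := by
    rw [map_add, bd_extraDegen, ← add_assoc, add_comm (C.bd (n + 1) z), ht, zero_add]
  rw [sigmaHomotopy_add_tauPi, bdPi_sigma, hz, ← map_add, ← map_add, hN, map_zero, map_zero]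

theorem sigma_add_tauPi_add_bdPi {x : C.X n} {y : C.X (n + 1)}
    (ht : x + C.t n x + C.bd n y = 0) :
    C.sigma (n + 1) (y + C.extraDegen n x) +
      C.tauPi (n + 1) (C.sigma (n + 1) (y + C.extraDegen n x)) +
      C.bdPi (n + 1) (C.sigmaHomotopy (n + 1) y) = 0 := by
  have hx : C.sigmaHomotopy n (C.bd n y) = C.sigmaHomotopy n (x + C.t n x) := by
    rw [← sub_eq_zero, ← map_sub, ZModModule.sub_eq_add, add_comm (C.bd n y), ht, map_zero]
  rw [bdPi_sigmaHomotopy, hx, ← sigma_extraDegen_add_tauPi, map_add, map_add,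
    add_add_add_comm (C.sigma (n + 1) y), ZModModule.add_self]

/-- The sequence `σ y₀, f y₀, σ (y₂ + s y₁), f y₂, σ (y₄ + s y₃), …` in the columns of
`Π^{ℤ/2}` or `Π^{Tate}` attached to a zigzag `y` starting in an even column of `CC(𝓜)`; here `f`
is `sigmaHomotopy` and `s` is `extraDegen`. -/
def transfer (n : ℕ) (y : ∀ i, C.X (n + i)) : ∀ i, C.PiX (n + i)
  | 0 => C.sigma n (y 0)
  | i + 1 =>
    if Even i then C.sigmaHomotopy (n + i) (y i)
    else C.sigma (n + i + 1) (y (i + 1) + C.extraDegen (n + i) (y i))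

theorem transfer_succ_of_even (y : ∀ i, C.X (n + i)) {i : ℕ} (hi : Even i) :
    C.transfer n y (i + 1) = C.sigmaHomotopy (n + i) (y i) := if_pos hi

theorem transfer_succ_of_odd (y : ∀ i, C.X (n + i)) {i : ℕ} (hi : ¬Even i) :
    C.transfer n y (i + 1) = C.sigma (n + i + 1) (y (i + 1) + C.extraDegen (n + i) (y i)) :=
  if_neg hi

theorem isZigzag_transfer {p : ℤ} (hp : Even p) {R : ℕ} {y : ∀ i, C.X (n + i)}
    (hy : C.CCdiff.IsZigzag p n R y) (hy₀ : y 0 ∈ cycles C.bd n) (p' : ℤ) :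
    C.PiDiff.IsZigzag p' n R (C.transfer n y)
  | 0, _ => by
    rw [transfer_succ_of_even y Even.zero]
    change C.sigma n (y 0) + C.tauPi n (C.sigma n (y 0)) + C.bdPi n (C.sigmaHomotopy n (y 0)) = 0
    rw [sigma_add_tauPi_of_mem_cycles hy₀, ZModModule.add_self]
  | i + 1, hi => by
    by_cases he : Even i
    · have ho : ¬Even (i + 1) := Nat.even_add_one.not.2 (not_not.2 he)
      rw [transfer_succ_of_even y he, transfer_succ_of_odd y ho]
      exact sigmaHomotopy_add_tauPi_add_bdPi (norm_add_bd'_of_isZigzag hp hy (by omega) he)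
        (add_t_add_bd_of_isZigzag hp hy hi ho)
    · rw [transfer_succ_of_odd y he, transfer_succ_of_even y (Nat.even_add_one.2 he)]
      exact sigma_add_tauPi_add_bdPi (add_t_add_bd_of_isZigzag hp hy (by omega) he)

theorem exists_isZigzag_bdPi (w : C.PiX (n + 1)) (p : ℤ) (R : ℕ) :
    ∃ z, z 0 = C.bdPi n w ∧ C.PiDiff.IsZigzag p n R z := by
  refine ⟨fun
    | 0 => C.bdPi n w
    | 1 => w + C.tauPi (n + 1) w
    | _ + 2 => 0, rfl, ?_⟩
  rintro (_ | _ | i) -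
  · change C.bdPi n w + C.tauPi n (C.bdPi n w) + C.bdPi n (w + C.tauPi (n + 1) w) = 0
    rw [map_add, bdPi_tauPi, ZModModule.add_self]
  · change w + C.tauPi (n + 1) w + C.tauPi (n + 1) (w + C.tauPi (n + 1) w) +
      C.bdPi (n + 1) 0 = 0
    rw [map_add, tauPi_tauPi, map_zero, add_zero, add_comm w, ZModModule.add_self]
  · simp only [map_zero, add_zero]

theorem HdRdegenAt.exists_isZigzag_PiDiff (hdeg : C.HdRdegenAt 1) {z : C.PiX n}
    (hz : z ∈ cycles C.bdPi n) (p : ℤ) (R : ℕ) :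
    ∃ x, x 0 = z ∧ C.PiDiff.IsZigzag p n R x := by
  have haug : C.augmentation n z ∈ cycles (C.CCdiff.vert (2 * R)) n := by
    rw [show C.CCdiff.vert (2 * R) = C.bd from funext (CCdiff_vert_of_even (even_two_mul _))]
    exact augmentation_mem_cycles hz
  obtain ⟨y, hy₀, hy⟩ := C.isPresentation_CC.exists_isZigzag hdeg
    (R := R) (p := 2 * R) (fun i hi => by rw [Set.mem_Ici]; omega) haug
  obtain ⟨w, hw⟩ := exists_eq_sigma_add_bdPi hz
  obtain ⟨x, hx₀, hx⟩ := exists_isZigzag_bdPi w p R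
  refine ⟨C.transfer n y + x, ?_, (isZigzag_transfer (even_two_mul _) hy ?_ p).add hx⟩
  · rw [Pi.add_apply, hx₀, transfer, hy₀, ← hw]
  · rw [hy₀]
    exact augmentation_mem_cycles hz

end CycMod

theorem pi_bicomplexes_degenerate_general (C : CycMod) (hdeg : C.HdRdegenAt 1) :
    C.PiZhalf.collapsesAt C.PiZhalf.Fcol 1 ∧ C.PiTate.collapsesAt C.PiTate.Fcol 1 :=
  ⟨C.isPresentation_PiZhalf.collapsesAt_one fun p _ _ _ hz => hdeg.exists_isZigzag_PiDiff hz p,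
    C.isPresentation_PiTate.collapsesAt_one fun p _ _ _ hz => hdeg.exists_isZigzag_PiDiff hz p⟩

/-- **Proposition 3.28.** Let `𝓜` be a bounded cyclic module over `𝔽₂` whose Hodge-to-de
Rham spectral sequence degenerates at the first page. Then the spectral sequence `ᵛʰE`
(first taking homology with respect to `∂_Π`) attached to each of the bicomplexes `Π^{ℤ/2}`
and `Π^{Tate}` also degenerates at the first page. -/
theorem pi_bicomplexes_degenerate (C : CycMod) (hbdd : C.Bounded)
    (hdeg : C.HdRdegenAt 1) :
    C.PiZhalf.collapsesAt C.PiZhalf.Fcol 1 ∧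
    C.PiTate.collapsesAt C.PiTate.Fcol 1 :=
  pi_bicomplexes_degenerate_general C hdeg

end LT
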